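/- arXiv:2507.04521 — 3 statements merged into one kernel-verified Lean document; each statement's English description precedes it below -/
import Mathlib

section
/- For every real number α there exist real numbers β and γ with β, γ ∈ G such that α = β + γ. -/
/-!
The two summands of an irrational `α` are built digit by digit. Suppose prefixes with values `p / q`
and `P / r` have been found, with error `d = |α - p / q - P / r|`. Choosing the next digit of the
first prefix so that the error is nearly absorbed gives a new denominator close to the ideal
value `X = 1 / (q * d)`, and the new error is proportional to the distance of the ideal (real) digit
from the integer actually chosen. The ratio `w` of successive denominators, taken alternately on the
two sides, therefore does not decrease, and grows unless this distance is close to `1`.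

The sign of the error must always allow the next extension. When both prefixes lie on the same side
of their continuations, the first digit is rounded up and the one on the other side down
(`ceil_step`, `floor_step`). Rounding up gains a factor at least `w / (w - 1)` unless the ideal digit
exceeds an integer by at most `1 / w`; in that case it is rounded down instead, and the next digit
on the same side is automatically about `w` or more, which gains even more. In both cases `w` can be
replaced by `w + 1 / 2`, and all digits used are at least `w - 2` (`advance`). Iterating, all
digits tend to infinity and the error tends to `0`; `exists_limit` turns the two sequences
of prefixes into elements of `G`, and `exists_init` provides a pair of prefixes to start from.
-/

noncomputable section

namespace ShulgaPaper

open Filter Topology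

/-- The value of the finite continued fraction `[0; a₁, …, aₙ]`
(the empty continued fraction has value `0`). -/
def cf : List ℕ → ℝ
  | [] => 0
  | a :: l => 1 / ((a : ℝ) + cf l)

/-- Iterates of the Gauss map, starting from the fractional part of `x`. -/
def gaussIter (x : ℝ) : ℕ → ℝ
  | 0 => Int.fract x
  | n + 1 => Int.fract (1 / gaussIter x n)

/-- The `n`-th partial quotient `aₙ(x)` of the continued fraction expansion of `x`
(for `n ≥ 1`; a junk value is returned if it is undefined). -/
def pq (x : ℝ) (n : ℕ) : ℕ := ⌊1 / gaussIter x (n - 1)⌋₊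

/-- The `n`-th partial quotient `aₙ(x)` of `x` is defined (`n ≥ 1`), i.e. `n` does not
exceed the length of the continued fraction expansion of `x`. -/
def pqDefined (x : ℝ) (n : ℕ) : Prop := gaussIter x (n - 1) ≠ 0

/-- The set `G` of real numbers that are rational or whose partial quotients diverge. -/
def G : Set ℝ :=
  {x | (∃ q : ℚ, x = (q : ℝ)) ∨ Tendsto (fun n => pq x n) atTop atTop}

/-- The list of pairs `(b_k, c_k)`, `k = 1, …, n`, produced by (a totalized version of)
Shulga's algorithm applied to `α`. -/
def shulgaList (α : ℝ) : ℕ → List (ℕ × ℕ)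
  | 0 => []
  | n + 1 =>
      let L := shulgaList α n
      let b := pq (α - cf (L.map Prod.snd)) (n + 1) + 1
      let c := pq (α - cf (L.map Prod.fst ++ [b])) (n + 1)
      L ++ [(b, c)]

/-- The list `[b₁, …, bₙ]` of Shulga's algorithm applied to `α`. -/
def bList (α : ℝ) (n : ℕ) : List ℕ := (shulgaList α n).map Prod.fst

/-- The list `[c₁, …, cₙ]` of Shulga's algorithm applied to `α`. -/
def cList (α : ℝ) (n : ℕ) : List ℕ := (shulgaList α n).map Prod.snd

/-- `bₙ` of Shulga's algorithm applied to `α` (for `n ≥ 1`). -/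
def shulgaB (α : ℝ) (n : ℕ) : ℕ := ((shulgaList α n).getLast?.getD (0, 0)).1

/-- `cₙ` of Shulga's algorithm applied to `α` (for `n ≥ 1`). -/
def shulgaC (α : ℝ) (n : ℕ) : ℕ := ((shulgaList α n).getLast?.getD (0, 0)).2

/-- The first `n` steps of Shulga's algorithm applied to `α` are defined: for each step
`k + 1 ≤ n`, the partial quotients `a_{k+1}(α - [0;c₁,…,c_k])` and
`a_{k+1}(α - [0;b₁,…,b_{k+1}])` defining `b_{k+1}` and `c_{k+1}` exist
(in particular the algorithm has not stopped before step `n`). -/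
def shulgaDefined (α : ℝ) (n : ℕ) : Prop :=
  ∀ k < n, pqDefined (α - cf (cList α k)) (k + 1) ∧
    pqDefined (α - cf (bList α (k + 1))) (k + 1)

/-- The half-open interval whose included endpoint is `x` and excluded endpoint is `y`,
the smaller one being the left endpoint. -/
def hIco (x y : ℝ) : Set ℝ := if x ≤ y then Set.Ico x y else Set.Ioc y x

/-- The list `[a 1, …, a n]`. -/
def listOf (a : ℕ → ℕ) (n : ℕ) : List ℕ := (List.range n).map fun i => a (i + 1)

/-- The interval `B_k` determined by the digits `b`, `c` (`k ≥ 1`). -/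
def Bset (b c : ℕ → ℕ) (k : ℕ) : Set ℝ :=
  hIco (cf (listOf b (k - 1) ++ [b k - 1]) + cf (listOf c (k - 1)))
    (cf (listOf b k) + cf (listOf c (k - 1)))

/-- The interval `C_k` determined by the digits `b`, `c` (`k ≥ 1`). -/
def Cset (b c : ℕ → ℕ) (k : ℕ) : Set ℝ :=
  hIco (cf (listOf c k) + cf (listOf b k))
    (cf (listOf c (k - 1) ++ [c k + 1]) + cf (listOf b k))

/-- `A₀ = [0,1]` and `Aₙ = ⋂_{k=1}^{n} (B_k ∩ C_k)` for `n ≥ 1`. -/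
def Aset (b c : ℕ → ℕ) : ℕ → Set ℝ
  | 0 => Set.Icc 0 1
  | n + 1 => ⋂ k ∈ Finset.Icc 1 (n + 1), (Bset b c k ∩ Cset b c k)

/-- The denominators of the convergents of `[0; a 1, a 2, …]`:
`q₀ = 1`, `q₁ = a 1`, `q_k = a k * q_{k-1} + q_{k-2}`. -/
def qden (a : ℕ → ℕ) : ℕ → ℕ
  | 0 => 1
  | 1 => a 1
  | n + 2 => a (n + 2) * qden a (n + 1) + qden a n

/-! ### Prefixes of continued fractions -/

/-- The matrix data of a finite prefix `[a₀; a₁, …, aₙ]` of a continued fraction: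
`p / q` is the value of the prefix and `p₀ / q₀` that of the prefix without its last digit. -/
structure Mat where
  p : ℤ
  p₀ : ℤ
  q : ℤ
  q₀ : ℤ

/-- The prefix extended by the digit `b`. -/
def Mat.step (M : Mat) (b : ℕ) : Mat := ⟨M.p * b + M.p₀, M.p, M.q * b + M.q₀, M.q⟩

/-- The number whose expansion starts with the prefix `M` and has tail `s ∈ [0, 1]`, that is
`[a₀; a₁, …, aₙ + s]`. -/
def Mat.eval (M : Mat) (s : ℝ) : ℝ := (M.p + M.p₀ * s) / (M.q + M.q₀ * s)

/-- The determinant of a prefix; its sign is that of `M.eval s - p / q` for `s > 0`. -/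
def Mat.det (M : Mat) : ℤ := M.p₀ * M.q - M.p * M.q₀

/-- The properties of prefix matrices used below. -/
structure Mat.Valid (M : Mat) : Prop where
  one_le : 1 ≤ M.q
  nonneg : 0 ≤ M.q₀
  le : M.q₀ ≤ M.q
  det_eq : M.det = 1 ∨ M.det = -1

lemma Mat.det_step (M : Mat) (b : ℕ) : (M.step b).det = -M.det := by
  simp only [Mat.det, Mat.step]; ring

lemma Mat.Valid.step {M : Mat} (h : M.Valid) {b : ℕ} (hb : 1 ≤ b) : (M.step b).Valid := by
  have hb' : (1 : ℤ) ≤ b := by exact_mod_cast hb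
  have h1 := h.one_le
  have h2 := h.nonneg
  refine ⟨?_, ?_, ?_, ?_⟩
  · simp only [Mat.step]; nlinarith
  · simp only [Mat.step]; linarith
  · simp only [Mat.step]; nlinarith
  · rw [Mat.det_step]; rcases h.det_eq with h | h <;> simp [h]

lemma Mat.eval_step (M : Mat) {b : ℕ} (hb : 1 ≤ b) {s : ℝ} (hs : 0 ≤ s) :
    (M.step b).eval s = M.eval (1 / (b + s)) := by
  have hb' : (1 : ℝ) ≤ b := by exact_mod_cast hb
  have h : (b + s : ℝ) ≠ 0 := by positivity
  simp only [Mat.eval, Mat.step]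
  rw [← mul_div_mul_right (M.p + M.p₀ * (1 / (b + s)) : ℝ) _ h]
  push_cast
  congr 1 <;> field_simp <;> ring

lemma Mat.Valid.q_pos {M : Mat} (h : M.Valid) : (1 : ℝ) ≤ M.q := by exact_mod_cast h.one_le

lemma Mat.Valid.q₀_nonneg {M : Mat} (h : M.Valid) : (0 : ℝ) ≤ M.q₀ := by exact_mod_cast h.nonneg

lemma Mat.Valid.den_pos {M : Mat} (h : M.Valid) {s : ℝ} (hs : 0 ≤ s) :
    (1 : ℝ) ≤ M.q + M.q₀ * s := by
  have := h.q_pos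
  have := mul_nonneg h.q₀_nonneg hs
  linarith

lemma Mat.Valid.eval_inj {M : Mat} (h : M.Valid) {s t : ℝ} (hs : 0 ≤ s) (ht : 0 ≤ t)
    (e : M.eval s = M.eval t) : s = t := by
  have h1 := h.den_pos hs
  have h2 := h.den_pos ht
  simp only [Mat.eval] at e
  rw [div_eq_div_iff (by positivity) (by positivity)] at e
  have hd : (M.p₀ * M.q - M.p * M.q₀ : ℝ) = 1 ∨ (M.p₀ * M.q - M.p * M.q₀ : ℝ) = -1 := by
    rcases h.det_eq with h | h <;> [left; right] <;> exact_mod_cast h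
  have e' : (M.p₀ * M.q - M.p * M.q₀ : ℝ) * (s - t) = 0 := by linear_combination e
  rcases hd with hd | hd <;> rw [hd] at e' <;> linarith

lemma Mat.Valid.eval_sub {M : Mat} (h : M.Valid) {s : ℝ} (hs : 0 ≤ s) :
    M.eval s - M.p / M.q = M.det * (s / (M.q * (M.q + M.q₀ * s))) := by
  have h1 : (M.q + M.q₀ * s : ℝ) ≠ 0 := (zero_lt_one.trans_le (h.den_pos hs)).ne'
  have h2 : (M.q : ℝ) ≠ 0 := (zero_lt_one.trans_le h.q_pos).ne'
  simp only [Mat.eval, Mat.det]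
  rw [div_sub_div _ _ h1 h2, ← mul_div_assoc, mul_comm (M.q : ℝ) (M.q + M.q₀ * s)]
  congr 1
  push_cast
  ring

lemma Mat.Valid.abs_eval_sub_le {M : Mat} (h : M.Valid) {s : ℝ} (hs : 0 ≤ s) :
    |M.eval s - M.p / M.q| ≤ s := by
  have h1 := h.den_pos hs
  have h2 := h.q_pos
  have hd : |(M.det : ℝ)| = 1 := by
    rcases h.det_eq with h | h <;> simp [h]
  rw [h.eval_sub hs, abs_mul, hd, one_mul, abs_of_nonneg (by positivity)]
  exact div_le_self hs (by nlinarith)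

/-! ### Digits along the Gauss map -/

lemma gaussIter_cons {b : ℕ} {s : ℝ} (hb : 1 ≤ b) (hs : 0 < s) (n : ℕ) :
    gaussIter (1 / (b + s)) (n + 1) = gaussIter s n := by
  have hb' : (1 : ℝ) ≤ b := by exact_mod_cast hb
  have hf : Int.fract (1 / (b + s)) = 1 / (b + s) :=
    Int.fract_eq_self.2 ⟨by positivity, by rw [div_lt_one (by positivity)]; linarith⟩
  induction n with
  | zero => simp only [gaussIter, hf, one_div_one_div, Int.fract_natCast_add]
  | succ n ih => rw [gaussIter, ih, gaussIter]

lemma pq_cons_succ {b : ℕ} {s : ℝ} (hb : 1 ≤ b) (hs : 0 < s) (n : ℕ) :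
    pq (1 / (b + s)) (n + 1 + 1) = pq s (n + 1) := by
  simp only [pq, Nat.add_sub_cancel, gaussIter_cons hb hs]

lemma pq_cons_one {b : ℕ} {s : ℝ} (hb : 1 ≤ b) (hs : 0 < s) (hs1 : s < 1) :
    pq (1 / (b + s)) 1 = b := by
  have hb' : (1 : ℝ) ≤ b := by exact_mod_cast hb
  have hf : Int.fract (1 / (b + s)) = 1 / (b + s) :=
    Int.fract_eq_self.2 ⟨by positivity, by rw [div_lt_one (by positivity)]; linarith⟩
  simp only [pq, Nat.sub_self, gaussIter, hf, one_div_one_div]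
  rw [Nat.floor_eq_iff (by positivity)]
  constructor <;> linarith

/-- The prefix `M` is the start of a genuine expansion: putting it in front of a tail does not
affect the divergence of the partial quotients. -/
def Mat.Good (M : Mat) : Prop :=
  ∀ s : ℝ, 0 < s → s < 1 → Tendsto (fun n => pq s n) atTop atTop →
    Tendsto (fun n => pq (M.eval s) n) atTop atTop

lemma good_int (z : ℤ) : Mat.Good ⟨z, 1, 1, 0⟩ := by
  intro s _ _ h
  have e : Mat.eval ⟨z, 1, 1, 0⟩ s = z + s := by simp [Mat.eval]
  have g : ∀ n, gaussIter (z + s) n = gaussIter s n := by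
    intro n
    induction n with
    | zero => simp [gaussIter]
    | succ n ih => simp only [gaussIter, ih]
  rw [e]
  simpa only [pq, g] using h

lemma Mat.Good.step {M : Mat} (h : M.Good) {b : ℕ} (hb : 1 ≤ b) : (M.step b).Good := by
  intro s hs hs1 ht
  have hb' : (1 : ℝ) ≤ b := by exact_mod_cast hb
  rw [M.eval_step hb hs.le]
  refine h _ (by positivity) (by rw [div_lt_one (by positivity)]; linarith) ?_
  rw [← tendsto_add_atTop_iff_nat 2]
  simpa only [pq_cons_succ hb hs] using (tendsto_add_atTop_iff_nat 1).2 ht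

/-- The number `[0; b₁, …, bₙ + s]` for `l = [b₁, …, bₙ]`. -/
def tail (l : List ℕ) (s : ℝ) : ℝ := l.foldr (fun b s => 1 / ((b : ℝ) + s)) s

lemma tail_cons (b : ℕ) (l : List ℕ) (s : ℝ) : tail (b :: l) s = 1 / ((b : ℝ) + tail l s) := rfl

lemma tail_nonneg (l : List ℕ) {s : ℝ} (hs : 0 ≤ s) : 0 ≤ tail l s := by
  induction l with
  | nil => exact hs
  | cons b l ih => rw [tail_cons]; positivity

lemma tail_le {l : List ℕ} (hl : l ≠ []) {m : ℝ} (hm : 0 < m) (h : ∀ b ∈ l, m ≤ (b : ℝ)) {s : ℝ}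
    (hs : 0 ≤ s) : tail l s ≤ 1 / m := by
  cases l with
  | nil => exact absurd rfl hl
  | cons b l =>
    rw [tail_cons]
    have := h b (by simp)
    have := tail_nonneg l hs
    exact one_div_le_one_div_of_le hm (by linarith)

lemma tail_pos (l : List ℕ) {s : ℝ} (hs : 0 < s) : 0 < tail l s := by
  induction l with
  | nil => exact hs
  | cons b l ih =>
    rw [tail_cons]; positivity

lemma tail_pos' {l : List ℕ} (hl : l ≠ []) {m : ℝ} (hm : 2 ≤ m) (h : ∀ b ∈ l, m ≤ (b : ℝ)) {s : ℝ}
    (hs : 0 ≤ s) : 0 < tail l s := by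
  cases l with
  | nil => exact absurd rfl hl
  | cons b l =>
    have := tail_nonneg l hs
    have := h b (by simp)
    rw [tail_cons]; exact one_div_pos.2 (by linarith)

lemma tail_lt_one (l : List ℕ) {m : ℝ} (hm : 2 ≤ m) (h : ∀ b ∈ l, m ≤ (b : ℝ)) {s : ℝ}
    (hs : 0 < s) (hs1 : s < 1) : tail l s < 1 := by
  cases l with
  | nil => exact hs1
  | cons b l =>
    refine (tail_le (by simp) (by linarith) h hs.le).trans_lt ?_
    rw [div_lt_one (by linarith)]; linarith

lemma one_le_of_two_le {m : ℝ} (hm : 2 ≤ m) {b : ℕ} (h : m ≤ (b : ℝ)) : 1 ≤ b := by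
  have : (1 : ℝ) ≤ b := by linarith
  exact_mod_cast this

/-- A digit of `tail l s` is either a member of `l` or an earlier digit of `s`. -/
lemma le_pq_tail (l : List ℕ) {m : ℝ} (hm : 2 ≤ m) (h : ∀ b ∈ l, m ≤ (b : ℝ)) {s : ℝ}
    (hs : 0 < s) (hs1 : s < 1) (n : ℕ)
    (H : ∀ j, j + l.length ≤ n → m ≤ (pq s (j + 1) : ℝ)) : m ≤ (pq (tail l s) (n + 1) : ℝ) := by
  induction l generalizing n with
  | nil => exact H n (by simp)
  | cons b l ih =>
    have h' : ∀ b ∈ l, m ≤ (b : ℝ) := fun b hb => h b (by simp [hb])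
    have hb : 1 ≤ b := one_le_of_two_le hm (h b (by simp))
    rw [tail_cons]
    cases n with
    | zero => rw [pq_cons_one hb (tail_pos l hs) (tail_lt_one l hm h' hs hs1)]; simp [h]
    | succ n =>
      rw [pq_cons_succ hb (tail_pos l hs)]
      exact ih h' n fun j hj => H j (by simp; omega)

lemma pq_tail_add (l : List ℕ) {m : ℝ} (hm : 2 ≤ m) (h : ∀ b ∈ l, m ≤ (b : ℝ)) {s : ℝ}
    (hs : 0 < s) (n : ℕ) : pq (tail l s) (n + l.length + 1) = pq s (n + 1) := by
  induction l with
  | nil => rfl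
  | cons b l ih =>
    have h' : ∀ b ∈ l, m ≤ (b : ℝ) := fun b hb => h b (by simp [hb])
    have hb : 1 ≤ b := one_le_of_two_le hm (h b (by simp))
    rw [tail_cons, List.length_cons, ← add_assoc, pq_cons_succ hb (tail_pos l hs), ih h']

/-! ### The number defined by an infinite sequence of extensions -/

/-- `M'` arises from the prefix `M` by appending at least one digit, all new digits being
at least `m`. -/
def Ext (m : ℝ) (M M' : Mat) : Prop :=
  ∃ l : List ℕ, l ≠ [] ∧ (∀ b ∈ l, m ≤ (b : ℝ)) ∧ M' = l.foldl Mat.step M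

lemma Ext.single {m : ℝ} (M : Mat) {b : ℕ} (h : m ≤ b) : Ext m M (M.step b) :=
  ⟨[b], by simp, by simpa using h, rfl⟩

lemma Ext.trans {m : ℝ} {M M' M'' : Mat} (h : Ext m M M') (h' : Ext m M' M'') : Ext m M M'' := by
  obtain ⟨l, h1, h2, rfl⟩ := h
  obtain ⟨l', h1', h2', rfl⟩ := h'
  refine ⟨l ++ l', by simp [h1], ?_, by simp⟩
  intro b hb
  rcases List.mem_append.1 hb with hb | hb
  · exact h2 b hb
  · exact h2' b hb

lemma Ext.mono {m m' : ℝ} (hm : m' ≤ m) {M M' : Mat} (h : Ext m M M') : Ext m' M M' := by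
  obtain ⟨l, h1, h2, rfl⟩ := h
  exact ⟨l, h1, fun b hb => hm.trans (h2 b hb), rfl⟩

lemma eval_foldl (l : List ℕ) {m : ℝ} (hm : 2 ≤ m) (h : ∀ b ∈ l, m ≤ (b : ℝ)) (M : Mat) {s : ℝ}
    (hs : 0 ≤ s) : (l.foldl Mat.step M).eval s = M.eval (tail l s) := by
  induction l generalizing M with
  | nil => rfl
  | cons b l ih =>
    have h' : ∀ b ∈ l, m ≤ (b : ℝ) := fun b hb => h b (by simp [hb])
    rw [List.foldl_cons, ih h', tail_cons,
      M.eval_step (one_le_of_two_le hm (h b (by simp))) (tail_nonneg l hs)]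

/-- Prefixes extended forever by digits tending to infinity converge to a number in `G`. The
limit is a common point of the nested compact cylinder sets of the prefixes. -/
lemma exists_limit {M : ℕ → Mat} (hV : ∀ k, (M k).Valid) (hG : (M 0).Good) {v : ℕ → ℝ}
    (hv : Monotone v) (hv2 : ∀ k, 2 ≤ v k) (hvt : Tendsto v atTop atTop)
    (hE : ∀ k, Ext (v k) (M k) (M (k + 1))) :
    ∃ β ∈ G, Tendsto (fun k => ((M k).p / (M k).q : ℝ)) atTop (𝓝 β) := by
  choose l hl hd hM using hE
  have ht01 : ∀ k, ∀ s ∈ Set.Icc (0 : ℝ) 1, tail (l k) s ∈ Set.Icc (0 : ℝ) 1 := by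
    intro k s hs
    have := hv2 k
    refine ⟨tail_nonneg _ hs.1, (tail_le (hl k) (by linarith) (hd k) hs.1).trans ?_⟩
    rw [div_le_one (by linarith)]; linarith
  have hcomp : ∀ k, IsCompact ((M k).eval '' Set.Icc (0 : ℝ) 1) := by
    intro k
    refine isCompact_Icc.image_of_continuousOn ?_
    unfold Mat.eval
    refine ContinuousOn.div (by fun_prop) (by fun_prop) ?_
    intro s hs
    have := (hV k).den_pos hs.1
    positivity
  obtain ⟨β, hβ⟩ := IsCompact.nonempty_iInter_of_sequence_nonempty_isCompact_isClosed
    (fun k => (M k).eval '' Set.Icc (0 : ℝ) 1)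
    (by
      rintro k _ ⟨s, hs, rfl⟩
      refine ⟨tail (l k) s, ht01 k s hs, ?_⟩
      rw [hM k, eval_foldl _ (hv2 k) (hd k) _ hs.1])
    (fun k => (Set.nonempty_Icc.2 zero_le_one).image _) (hcomp 0) (fun k => (hcomp k).isClosed)
  rw [Set.mem_iInter] at hβ
  choose s hs hsβ using hβ
  have hst : ∀ k, s k = tail (l k) (s (k + 1)) := by
    intro k
    refine (hV k).eval_inj (hs k).1 (tail_nonneg _ (hs (k + 1)).1) ?_
    rw [hsβ k, ← hsβ (k + 1), hM k, eval_foldl _ (hv2 k) (hd k) _ (hs (k + 1)).1]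
  have hs0 : ∀ k, 0 < s k := fun k => by
    rw [hst k]; exact tail_pos' (hl k) (hv2 k) (hd k) (hs (k + 1)).1
  have hsv : ∀ k, s k ≤ 1 / v k := fun k => by
    rw [hst k]; exact tail_le (hl k) (by linarith [hv2 k]) (hd k) (hs (k + 1)).1
  have hs1 : ∀ k, s k < 1 := fun k => by
    have := hv2 k
    exact (hsv k).trans_lt (by rw [div_lt_one (by linarith)]; linarith)
  have hpq : ∀ n k, v k ≤ (pq (s k) (n + 1) : ℝ) := by
    intro n
    induction n using Nat.strong_induction_on with
    | _ n ih =>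
      intro k
      rw [hst k]
      refine le_pq_tail (l k) (hv2 k) (hd k) (hs0 _) (hs1 _) n fun j hj => ?_
      have := List.length_pos_of_ne_nil (hl k)
      exact (hv (Nat.le_succ k)).trans (ih j (by omega) (k + 1))
  have hshift : ∀ k, ∃ N, ∀ n, pq (s 0) (n + N + 1) = pq (s k) (n + 1) := by
    intro k
    induction k with
    | zero => exact ⟨0, fun n => rfl⟩
    | succ k ih =>
      obtain ⟨N, hN⟩ := ih
      refine ⟨(l k).length + N, fun n => ?_⟩
      rw [← add_assoc, hN, hst k, pq_tail_add _ (hv2 k) (hd k) (hs0 _)]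
  refine ⟨β, Or.inr ?_, ?_⟩
  · rw [← hsβ 0]
    refine hG _ (hs0 0) (hs1 0) ?_
    rw [tendsto_atTop]
    intro B
    obtain ⟨k, hk⟩ := (hvt.eventually_ge_atTop (B : ℝ)).exists
    obtain ⟨N, hN⟩ := hshift k
    filter_upwards [eventually_ge_atTop (N + 1)] with n hn
    obtain ⟨j, rfl⟩ := Nat.exists_eq_add_of_le hn
    have h1 := hk.trans (hpq j k)
    rw [← hN j] at h1
    rw [show N + 1 + j = j + N + 1 by ring]
    exact_mod_cast h1
  · rw [tendsto_iff_dist_tendsto_zero]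
    refine squeeze_zero (fun _ => dist_nonneg) (fun k => ?_)
      ((tendsto_const_nhds (x := (1 : ℝ))).div_atTop hvt)
    rw [dist_comm, Real.dist_eq, ← hsβ k]
    exact ((hV k).abs_eval_sub_le (hs k).1).trans (hsv k)

/-! ### Extending a pair of prefixes -/

/-- The error left by the prefixes `M` and `N` of the two summands of `α`. -/
def err (α : ℝ) (M N : Mat) : ℝ := α - M.p / M.q - N.p / N.q

/-- The state of the construction. The two prefixes lie on the same side of their continuations
and the error has the matching sign; with `d` the absolute value of the error, the ratios
`N.q / M.q` and `1 / (M.q * N.q * d)` are both at least `w`. The second ratio is roughly that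
of the next denominator on the side of `M` to `N.q`. -/
structure Inv (α w : ℝ) (M N : Mat) : Prop where
  validM : M.Valid
  validN : N.Valid
  det_eq : M.det = N.det
  pos : 0 < M.det * err α M N
  ratio : w * M.q ≤ N.q
  small : M.q * N.q * w * (M.det * err α M N) ≤ 1

lemma err_comm (α : ℝ) (M N : Mat) : err α M N = err α N M := by unfold err; ring

lemma err_ne_zero {α : ℝ} (hα : Irrational α) (M N : Mat) : err α M N ≠ 0 := by
  intro h
  refine hα ⟨(M.p / M.q + N.p / N.q : ℚ), ?_⟩
  unfold err at h
  push_cast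
  linarith

lemma Mat.Valid.det_sq {M : Mat} (h : M.Valid) : (M.det : ℝ) * M.det = 1 := by
  rcases h.det_eq with h | h <;> simp [h]

lemma err_step (α : ℝ) {M : Mat} (h : M.Valid) (N : Mat) {b : ℕ} (hb : 1 ≤ b) :
    M.det * err α (M.step b) N = M.det * err α M N - 1 / (M.q * (M.step b).q) := by
  have h1 := h.q_pos
  have h2 := (h.step hb).q_pos
  have e : ((M.step b).p / (M.step b).q - M.p / M.q : ℝ) = M.det / (M.q * (M.step b).q) := by
    rw [div_sub_div _ _ (by positivity) (by positivity), mul_comm (M.q : ℝ) (M.step b).q]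
    congr 1
    simp only [Mat.step, Mat.det]
    push_cast
    ring
  have e2 : err α (M.step b) N = err α M N - M.det / (M.q * (M.step b).q) := by
    rw [← e]; unfold err; ring
  rw [e2, mul_sub, ← mul_div_assoc, h.det_sq]

lemma exists_floor {M : Mat} (h : M.Valid) {X : ℝ} (hX : 2 * (M.q : ℝ) ≤ X) :
    ∃ b : ℕ, 1 ≤ b ∧ X - M.q < (M.step b).q ∧ ((M.step b).q : ℝ) ≤ X := by
  have h1 := h.q_pos
  have h3 : (M.q₀ : ℝ) ≤ M.q := by exact_mod_cast h.le
  have hy : 1 ≤ (X - M.q₀) / M.q := by rw [le_div_iff₀ (by positivity)]; linarith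
  refine ⟨⌊(X - M.q₀) / M.q⌋₊, Nat.one_le_floor_iff _ |>.2 hy, ?_, ?_⟩
  · have := Nat.lt_floor_add_one ((X - M.q₀) / M.q)
    rw [div_lt_iff₀ (by positivity)] at this
    simp only [Mat.step]; push_cast; linarith
  · have := Nat.floor_le (zero_le_one.trans hy)
    rw [le_div_iff₀ (by positivity)] at this
    simp only [Mat.step]; push_cast; linarith

/-- A digit is large as soon as it makes the denominator large. -/
lemma le_digit {M : Mat} (h : M.Valid) {b : ℕ} {w : ℝ}
    (hq : (w - 1) * M.q ≤ (M.step b).q) : w - 2 ≤ b := by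
  have h1 := h.q_pos
  have h3 : (M.q₀ : ℝ) ≤ M.q := by exact_mod_cast h.le
  simp only [Mat.step] at hq
  push_cast at hq
  have : (w - 2) * M.q ≤ b * M.q := by linarith
  exact le_of_mul_le_mul_right this (by positivity)

/-- Undershooting the ideal denominator `X = 1 / (M.q * d)` by at most `M.q / c` improves the
product of denominator and error by the factor `c`; the new error matches the new prefix. -/
lemma floor_step {α : ℝ} (hα : Irrational α) {M N : Mat} (h : M.Valid) {X c : ℝ}
    (hX0 : 0 < X) (hX : M.q * X * (M.det * err α M N) = 1) {b : ℕ} (hb : 1 ≤ b)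
    (hc : 0 < c) (h1 : c * (X - (M.step b).q) ≤ M.q) (h2 : ((M.step b).q : ℝ) ≤ X) :
    0 < (M.step b).det * err α (M.step b) N ∧
      (M.step b).q * (c * X) * ((M.step b).det * err α (M.step b) N) ≤ 1 := by
  have hq := h.q_pos
  have hQ := (h.step hb).q_pos
  have e := err_step α h N hb
  have hd : M.det * err α M N = 1 / (M.q * X) := by field_simp; linarith
  have e2 : (M.step b).det * err α (M.step b) N = (X - (M.step b).q) / (M.q * X * (M.step b).q) := by
    rw [M.det_step]; push_cast
    rw [neg_mul, e, hd]; field_simp; ring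
  have hne : (M.step b).det * err α (M.step b) N ≠ 0 := by
    refine mul_ne_zero ?_ (err_ne_zero hα _ _)
    rcases (h.step hb).det_eq with h | h <;> simp [h]
  constructor
  · refine lt_of_le_of_ne ?_ hne.symm
    rw [e2]; exact div_nonneg (by linarith) (by positivity)
  · rw [e2]
    have : (M.step b).q * (c * X) * ((X - (M.step b).q) / (M.q * X * (M.step b).q))
      = c * (X - (M.step b).q) / M.q := by field_simp
    rw [this, div_le_one (by positivity)]; exact h1

/-- The variant of `floor_step` that overshoots the ideal denominator: the error keeps
its sign. -/
lemma ceil_step {α : ℝ} {M N : Mat} (h : M.Valid) {X c : ℝ}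
    (hX0 : 0 < X) (hX : M.q * X * (M.det * err α M N) = 1) {b : ℕ} (hb : 1 ≤ b)
    (h1 : c * ((M.step b).q - X) ≤ M.q) (h2 : X < ((M.step b).q : ℝ)) :
    0 < M.det * err α (M.step b) N ∧
      (M.step b).q * (c * X) * (M.det * err α (M.step b) N) ≤ 1 := by
  have hq := h.q_pos
  have hQ := (h.step hb).q_pos
  have e := err_step α h N hb
  have hd : M.det * err α M N = 1 / (M.q * X) := by field_simp; linarith
  have e2 : M.det * err α (M.step b) N = ((M.step b).q - X) / (M.q * X * (M.step b).q) := by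
    rw [e, hd]; field_simp
  constructor
  · rw [e2]; exact div_pos (by linarith) (by positivity)
  · rw [e2]
    have : (M.step b).q * (c * X) * (((M.step b).q - X) / (M.q * X * (M.step b).q))
      = c * ((M.step b).q - X) / M.q := by field_simp
    rw [this, div_le_one (by positivity)]; exact h1

lemma exists_ideal {q d : ℝ} (hq : 1 ≤ q) (hd : 0 < d) : ∃ X : ℝ, 0 < X ∧ q * X * d = 1 :=
  ⟨1 / (q * d), by positivity, by field_simp⟩

/-- The step that makes the construction work: either both prefixes get one digit, or `M` gets two
digits and the roles are exchanged, and `w` increases. -/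
lemma advance {α w : ℝ} (hα : Irrational α) (hw : 4 ≤ w) {M N : Mat} (h : Inv α w M N) :
    (∃ M' N', Ext (w - 2) M M' ∧ Ext (w - 2) N N' ∧ Inv α (w + 1 / 2) M' N') ∨
    (∃ M', Ext (w - 2) M M' ∧ Inv α (w + 1 / 2) N M') := by
  obtain ⟨hM, hN, hdet, hpos, hratio, hsmall⟩ := h
  have hq := hM.q_pos
  have hr := hN.q_pos
  obtain ⟨X, hX0, hX⟩ := exists_ideal hq hpos
  have hXr : w * N.q ≤ X := by
    have h1 : M.q * N.q * w * (M.det * err α M N) ≤ M.q * X * (M.det * err α M N) := by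
      rw [hX]; exact hsmall
    have h2 : (M.q * N.q * w : ℝ) ≤ M.q * X := le_of_mul_le_mul_right h1 hpos
    have h3 : (M.q : ℝ) * (w * N.q) ≤ M.q * X := by linarith
    exact le_of_mul_le_mul_left h3 (by positivity)
  have hrX : 4 * (N.q : ℝ) ≤ X := by nlinarith
  have hqr : 4 * (M.q : ℝ) ≤ N.q := by nlinarith
  have hwq : w * (M.q : ℝ) ≤ X := by linarith
  obtain ⟨b, hb, hb1, hb2⟩ := exists_floor hM (X := X) (by linarith)
  have hM1 := hM.step hb
  have hQ := hM1.q_pos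
  by_cases hcase : w * (X - (M.step b).q) ≤ M.q
  · -- The ideal digit is barely above an integer: a second digit can be appended at once.
    right
    obtain ⟨hp1, hs1⟩ := floor_step hα hM hX0 hX hb (by linarith) hcase hb2
    obtain ⟨X₁, hX₁0, hX₁⟩ := exists_ideal hQ hp1
    have hXX : w * X ≤ X₁ := by
      have h2 := le_of_mul_le_mul_right (hs1.trans hX₁.ge) hp1
      exact le_of_mul_le_mul_left h2 (by positivity)
    have h4X : 4 * X ≤ X₁ := by nlinarith
    have hwQ : w * ((M.step b).q : ℝ) ≤ X₁ := by nlinarith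
    obtain ⟨b', hb', hb1', hb2'⟩ := exists_floor hM1 (X := X₁) (by linarith)
    obtain ⟨hp2, hs2⟩ := floor_step hα hM1 hX₁0 hX₁ hb' one_pos (by linarith) hb2'
    have hM2 := hM1.step hb'
    have hQ2 := hM2.q_pos
    have hdet2 : ((M.step b).step b').det = N.det := by
      rw [Mat.det_step, Mat.det_step, neg_neg, hdet]
    have hwX : (w + 1 / 2) * (N.q : ℝ) ≤ (w - 1) * X := by
      have : 3 * X ≤ (w - 1) * X := by nlinarith
      nlinarith
    rw [hdet2] at hp2 hs2
    refine ⟨(M.step b).step b', (Ext.single M (le_digit hM (by linarith))).trans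
      (Ext.single _ (le_digit hM1 (by linarith))), hN, hM2, hdet2.symm, ?_, by linarith, ?_⟩
    · rwa [err_comm]
    · rw [err_comm]
      refine le_trans ?_ hs2
      refine mul_le_mul_of_nonneg_right ?_ hp2.le
      have : (w + 1 / 2) * (N.q : ℝ) ≤ 1 * X₁ := by linarith
      have := mul_le_mul_of_nonneg_left this (zero_le_one.trans hQ2)
      linarith
  · -- Round the ideal digit up on the side of `M`, with a gain, then down on the side of `N`.
    left
    push Not at hcase
    have hstep : ((M.step (b + 1)).q : ℝ) = (M.step b).q + M.q := by
      simp only [Mat.step]; push_cast; ring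
    have hM1 := hM.step (b := b + 1) (by omega)
    have hQ := hM1.q_pos
    have hgain : w / (w - 1) * ((M.step (b + 1)).q - X) ≤ M.q := by
      rw [div_mul_eq_mul_div, div_le_iff₀ (by linarith), hstep]
      linarith
    obtain ⟨hp1, hs1⟩ := ceil_step hM hX0 hX (by omega) hgain (by rw [hstep]; linarith)
    rw [err_comm, hdet] at hp1 hs1
    obtain ⟨Y, hY0, hY⟩ := exists_ideal hr hp1
    -- `Y` is at least `(w + 1)` times the new denominator since `w² / (w - 1) ≥ w + 1`.
    have hYQ : (w + 1) * ((M.step (b + 1)).q : ℝ) ≤ Y := by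
      have h2 := le_of_mul_le_mul_right (hs1.trans hY.ge) hp1
      have h3 : w + 1 ≤ w / (w - 1) * w := by
        rw [div_mul_eq_mul_div, le_div_iff₀ (by linarith)]; nlinarith
      have h4 : w / (w - 1) * (w * N.q) ≤ w / (w - 1) * X :=
        mul_le_mul_of_nonneg_left hXr (div_nonneg (by linarith) (by linarith))
      have h5 : (w + 1) * (N.q : ℝ) ≤ w / (w - 1) * X := by nlinarith
      have h6 : (M.step (b + 1)).q * ((w + 1) * N.q) ≤ N.q * Y :=
        (mul_le_mul_of_nonneg_left h5 (by positivity)).trans h2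
      have h7 : (N.q : ℝ) * ((w + 1) * (M.step (b + 1)).q) ≤ N.q * Y := by linarith
      exact le_of_mul_le_mul_left h7 (by positivity)
    have hQX : X ≤ (M.step (b + 1)).q := by rw [hstep]; linarith
    have hQY : ((M.step (b + 1)).q : ℝ) ≤ Y := by
      have : 0 ≤ w * ((M.step (b + 1)).q : ℝ) := by positivity
      linarith
    have hYr : w * (N.q : ℝ) ≤ Y := by linarith
    have hY2 : 2 * (N.q : ℝ) ≤ Y := by linarith
    obtain ⟨c, hc, hc1, hc2⟩ := exists_floor hN hY2
    obtain ⟨hp2, hs2⟩ := floor_step hα hN hY0 hY hc one_pos (by linarith) hc2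
    have hN1 := hN.step hc
    have hR := hN1.q_pos
    have hdet1 : (M.step (b + 1)).det = (N.step c).det := by
      rw [Mat.det_step, Mat.det_step, hdet]
    rw [err_comm, ← hdet1] at hp2 hs2
    refine ⟨M.step (b + 1), N.step c, Ext.single M (le_digit hM (by linarith)),
      Ext.single N (le_digit hN (by linarith)), hM1, hN1, hdet1, hp2, by linarith, ?_⟩
    refine le_trans ?_ hs2
    refine mul_le_mul_of_nonneg_right ?_ hp2.le
    have : (w + 1 / 2) * ((M.step (b + 1)).q : ℝ) ≤ 1 * Y := by linarith
    have := mul_le_mul_of_nonneg_left this (zero_le_one.trans hR)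
    linarith

lemma Inv.mono {α w w' : ℝ} (hw : w' ≤ w) {M N : Mat} (h : Inv α w M N) : Inv α w' M N := by
  have hq := h.validM.q_pos
  have hr := h.validN.q_pos
  have hp := h.pos
  refine ⟨h.validM, h.validN, h.det_eq, h.pos, le_trans ?_ h.ratio, le_trans ?_ h.small⟩ <;> gcongr

/-- Both prefixes get at least one new digit after two applications of `advance`. -/
lemma advance_both {α w : ℝ} (hα : Irrational α) (hw : 4 ≤ w) {M N : Mat} (h : Inv α w M N) :
    ∃ M' N', Ext (w - 2) M M' ∧ Ext (w - 2) N N' ∧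
      (Inv α (w + 1 / 2) M' N' ∨ Inv α (w + 1 / 2) N' M') := by
  rcases advance hα hw h with ⟨M', N', h1, h2, h3⟩ | ⟨M', h1, h2⟩
  · exact ⟨M', N', h1, h2, Or.inl h3⟩
  · rcases advance hα (by linarith) h2 with ⟨N', M'', h3, h4, h5⟩ | ⟨N', h3, h4⟩
    · exact ⟨M'', N', h1.trans (h4.mono (by linarith)), h3.mono (by linarith),
        Or.inr (h5.mono (by linarith))⟩
    · exact ⟨M', N', h1, h3.mono (by linarith), Or.inl (h4.mono (by linarith))⟩

/-- `Inv` up to exchanging the two summands. -/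
def SymInv (α w : ℝ) (x : Mat × Mat) : Prop := Inv α w x.1 x.2 ∨ Inv α w x.2 x.1

lemma SymInv.advance {α w : ℝ} (hα : Irrational α) (hw : 4 ≤ w) {x : Mat × Mat}
    (h : SymInv α w x) :
    ∃ y : Mat × Mat, Ext (w - 2) x.1 y.1 ∧ Ext (w - 2) x.2 y.2 ∧ SymInv α (w + 1 / 2) y := by
  rcases h with h | h
  · obtain ⟨M', N', h1, h2, h3⟩ := advance_both hα hw h
    exact ⟨(M', N'), h1, h2, h3⟩
  · obtain ⟨M', N', h1, h2, h3⟩ := advance_both hα hw h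
    exact ⟨(N', M'), h2, h1, h3.symm⟩

lemma SymInv.valid {α w : ℝ} {x : Mat × Mat} (h : SymInv α w x) : x.1.Valid ∧ x.2.Valid := by
  rcases h with h | h
  · exact ⟨h.validM, h.validN⟩
  · exact ⟨h.validN, h.validM⟩

lemma Inv.abs_err_le {α w : ℝ} (hw : 0 < w) {M N : Mat} (h : Inv α w M N) :
    |err α M N| ≤ 1 / w := by
  have hq := h.validM.q_pos
  have hr := h.validN.q_pos
  have hp := h.pos
  have e : |err α M N| = M.det * err α M N := by
    rw [← abs_of_pos hp, abs_mul]
    rcases h.validM.det_eq with h | h <;> simp [h]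
  rw [e, le_div_iff₀ hw]
  have := h.small
  have h1 : (1 : ℝ) ≤ M.q * N.q := by nlinarith
  have h2 : 0 ≤ w * (M.det * err α M N) := by positivity
  nlinarith

lemma SymInv.abs_err_le {α w : ℝ} (hw : 0 < w) {x : Mat × Mat} (h : SymInv α w x) :
    |err α x.1 x.2| ≤ 1 / w := by
  rcases h with h | h
  · exact h.abs_err_le hw
  · rw [err_comm]; exact h.abs_err_le hw

lemma sum_of_symInv {α : ℝ} (hα : Irrational α) {x₀ : Mat × Mat} (h₀ : SymInv α 4 x₀)
    (g₁ : x₀.1.Good) (g₂ : x₀.2.Good) : ∃ β γ : ℝ, β ∈ G ∧ γ ∈ G ∧ α = β + γ := by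
  have hw : ∀ k : ℕ, (4 : ℝ) ≤ 4 + k / 2 := fun k => by
    have : (0 : ℝ) ≤ k := k.cast_nonneg
    linarith
  have hstep : ∀ (k : ℕ) (x : {x : Mat × Mat // SymInv α (4 + k / 2) x}),
      ∃ y : {y : Mat × Mat // SymInv α (4 + (k + 1 : ℕ) / 2) y},
        Ext (4 + k / 2 - 2) x.1.1 y.1.1 ∧ Ext (4 + k / 2 - 2) x.1.2 y.1.2 := by
    rintro k ⟨x, hx⟩
    obtain ⟨y, h1, h2, h3⟩ := hx.advance hα (hw k)
    refine ⟨⟨y, ?_⟩, h1, h2⟩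
    convert h3 using 1
    push_cast
    ring
  choose F hF using hstep
  let S : (k : ℕ) → {x : Mat × Mat // SymInv α (4 + k / 2) x} :=
    fun k => Nat.rec ⟨x₀, by simpa using h₀⟩ (fun k x => F k x) k
  have hS : ∀ k, S (k + 1) = F k (S k) := fun k => rfl
  have hvm : Monotone fun k : ℕ => (4 + k / 2 - 2 : ℝ) := by
    intro a b hab
    have : (a : ℝ) ≤ b := by exact_mod_cast hab
    dsimp only
    linarith
  have hv2 : ∀ k : ℕ, (2 : ℝ) ≤ 4 + k / 2 - 2 := fun k => by linarith [hw k]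
  have hwt : Tendsto (fun k : ℕ => (4 + k / 2 : ℝ)) atTop atTop :=
    tendsto_atTop_add_const_left _ _ (tendsto_natCast_atTop_atTop.atTop_div_const two_pos)
  have hvt : Tendsto (fun k : ℕ => (4 + k / 2 - 2 : ℝ)) atTop atTop :=
    tendsto_atTop_add_const_right _ (-2) hwt
  obtain ⟨β, hβ, tβ⟩ := exists_limit (M := fun k => (S k).1.1) (fun k => (S k).2.valid.1) g₁ hvm
    hv2 hvt (fun k => by rw [hS]; exact (hF k (S k)).1)
  obtain ⟨γ, hγ, tγ⟩ := exists_limit (M := fun k => (S k).1.2) (fun k => (S k).2.valid.2) g₂ hvm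
    hv2 hvt (fun k => by rw [hS]; exact (hF k (S k)).2)
  refine ⟨β, γ, hβ, hγ, ?_⟩
  have t1 : Tendsto (fun k => err α (S k).1.1 (S k).1.2) atTop (𝓝 (α - β - γ)) :=
    (tendsto_const_nhds.sub tβ).sub tγ
  have t2 : Tendsto (fun k => err α (S k).1.1 (S k).1.2) atTop (𝓝 0) :=
    squeeze_zero_norm (fun k => (S k).2.abs_err_le (by linarith [hw k]))
      ((tendsto_const_nhds (x := (1 : ℝ))).div_atTop hwt)
  linarith [tendsto_nhds_unique t1 t2]

/-! ### The initial prefixes -/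

/-- One step of the continued fraction algorithm applied to `α`. -/
lemma exists_step {α : ℝ} {M : Mat} (hM : M.Valid) (hG : M.Good) {s : ℝ} (hs : Irrational s)
    (h0 : 0 < s) (h1 : s < 1) (e : α = M.eval s) :
    ∃ M' : Mat, M'.Valid ∧ M'.Good ∧ M'.det = -M.det ∧ M.q + M.q₀ ≤ M'.q ∧ M'.q₀ = M.q ∧
      ∃ t : ℝ, Irrational t ∧ 0 < t ∧ t < 1 ∧ α = M'.eval t := by
  have hy : 1 ≤ 1 / s := by rw [le_div_iff₀ h0]; linarith
  have hb : 1 ≤ ⌊1 / s⌋₊ := (Nat.one_le_floor_iff _).2 hy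
  have hle := Nat.floor_le (zero_le_one.trans hy)
  have hlt := Nat.lt_floor_add_one (1 / s)
  have hirr : Irrational (1 / s - ⌊1 / s⌋₊) := by
    rw [one_div]; exact hs.inv.sub_natCast _
  have hpos : 0 < 1 / s - ⌊1 / s⌋₊ := lt_of_le_of_ne (by linarith) hirr.ne_zero.symm
  refine ⟨M.step ⌊1 / s⌋₊, hM.step hb, hG.step hb, M.det_step _, ?_, rfl,
    1 / s - ⌊1 / s⌋₊, hirr, hpos, by linarith, ?_⟩
  · have : (1 : ℤ) ≤ (⌊1 / s⌋₊ : ℕ) := by exact_mod_cast hb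
    have := hM.one_le
    simp only [Mat.step]
    nlinarith
  · rw [M.eval_step hb hpos.le, add_sub_cancel, one_div_one_div, e]

/-- The initial pair consists of the prefix `0` for one summand and the first four digits of `α`
for the other: four is even, so that the signs agree, and the denominator is at least `5`. -/
lemma exists_init {α : ℝ} (hα : Irrational α) :
    ∃ x : Mat × Mat, SymInv α 4 x ∧ x.1.Good ∧ x.2.Good := by
  have hv : ∀ z : ℤ, Mat.Valid ⟨z, 1, 1, 0⟩ := fun z =>
    ⟨le_refl _, le_refl _, zero_le_one, Or.inl (by simp [Mat.det])⟩
  have hirr : Irrational (Int.fract α) := hα.sub_intCast _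
  have hpos : 0 < Int.fract α := lt_of_le_of_ne (Int.fract_nonneg α) hirr.ne_zero.symm
  obtain ⟨A, vA, gA, dA, qA, qA', s, is, s0, s1, es⟩ := exists_step (α := α) (hv ⌊α⌋)
    (good_int _) hirr hpos (Int.fract_lt_one α) (by simp [Mat.eval])
  obtain ⟨B, vB, gB, dB, qB, qB', t, it, t0, t1, et⟩ := exists_step vA gA is s0 s1 es
  obtain ⟨C, vC, gC, dC, qC, qC', u, iu, u0, u1, eu⟩ := exists_step vB gB it t0 t1 et
  obtain ⟨D, vD, gD, dD, qD, qD', v, iv, v0, v1, ev⟩ := exists_step vC gC iu u0 u1 eu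
  have hD : D.det = 1 := by rw [dD, dC, dB, dA]; simp [Mat.det]
  have hq : 5 ≤ D.q := by
    simp only at qA qA'
    omega
  have hq' : (5 : ℝ) ≤ D.q := by exact_mod_cast hq
  have hden := vD.den_pos v0.le
  have herr : err α ⟨0, 1, 1, 0⟩ D = v / (D.q * (D.q + D.q₀ * v)) := by
    have := vD.eval_sub v0.le
    rw [hD, ← ev] at this
    simpa [err] using this
  refine ⟨(⟨0, 1, 1, 0⟩, D), Or.inl ⟨hv 0, vD, ?_, ?_, ?_, ?_⟩, good_int 0, gD⟩
  · rw [hD]; simp [Mat.det]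
  · rw [herr]
    simp only [Mat.det]
    norm_num
    positivity
  · norm_num; linarith
  · dsimp only
    rw [herr]
    simp only [Mat.det]
    norm_num
    have h1 := mul_nonneg vD.q₀_nonneg v0.le
    have : D.q * 4 * (v / (D.q * (D.q + D.q₀ * v))) = 4 * v / (D.q + D.q₀ * v) := by field_simp
    rw [this, div_le_one (by positivity)]
    linarith

/-- every real number is a sum of two numbers in `G`. -/
theorem stmt0 : ∀ α : ℝ, ∃ β γ : ℝ, β ∈ G ∧ γ ∈ G ∧ α = β + γ := by
  intro α
  by_cases hα : Irrational α
  · obtain ⟨x, hx, g₁, g₂⟩ := exists_init hα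
    exact sum_of_symInv hα hx g₁ g₂
  · obtain ⟨q, hq⟩ := not_not.1 hα
    exact ⟨α, 0, Or.inl ⟨q, hq.symm⟩, Or.inl ⟨0, by simp⟩, by simp⟩

end ShulgaPaper
end
end

section
/- For any α ∈ [0,1] and any n ≥ 2 for which the n-th step of Shulga's algorithm applied to α is defined, the Shulga sequences satisfy c_n > b_n. -/
/-!
After `n` steps write `q, q'` and `Q, Q'` for the last two denominators of `[0; b₁, …, bₙ]` and
`[0; c₁, …, cₙ]`. The proof carries along that `α - [0; b₁, …, bₙ]` equals
`[0; c₁, …, cₙ + t]` with `0 ≤ t < 1`, that `q ≤ Q` and `q' ≤ Q'`, and (for `n ≥ 1`) that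
`q (q - q') < Q' (Q + Q')`.

Because `q ≤ Q` and `q' ≤ Q'`, moving the deviation to the other side gives
`α - [0; c₁, …, cₙ] = [0; b₁, …, bₙ + s]` with `0 ≤ s < 1`, so `b = bₙ₊₁ = ⌊1 / s⌋ + 1`; since
`1 / b < s`, what remains of the deviation has the same sign and is smaller, so
`α - [0; b₁, …, bₙ, b] = [0; c₁, …, cₙ + u]` with `0 < u < 1` and `cₙ₊₁ = ⌊1 / u⌋`. Put
`Z = q (q / s + q') = Q (Q / t + Q')`, `M = q (q b + q')` and `W = Q (Q / u + Q')`. Then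
`1 / W = 1 / Z - 1 / M`, while `Z > Q (Q + Q')` and `M - q² ≤ Z < M`.

* `core_dominates`: `M - Z ≤ q²` yields `W ≥ (q b + q') (q b + q' - q)`, and `1 / u < cₙ₊₁ + 1`
  turns this into the denominator inequality at `n + 1`. It needs no such inequality at `n`, so it
  starts the induction at `n = 0`.
* `core_growth`: the denominator inequality at `n` yields `1 / u ≥ b + 1`, hence `cₙ₊₁ > bₙ₊₁`.

At the first step the new denominator inequality says `b₁ (b₁ - 1) < c₁ + 1`, which gives
`b₁ ≤ c₁`. So `bₖ ≤ cₖ` throughout, which preserves `q ≤ Q` and `q' ≤ Q'`.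
-/

noncomputable section

namespace ShulgaPaper

open Filter Topology

/-! ### Continuants and the Gauss map -/

/-- `Conv l p p' q q'` says that all entries of `l` are at least `2` and that `p / q` and
`p' / q'` are the last and last but one convergents of `[0; l]`. For the empty list they are
`0 / 1` and the formal convergent `1 / 0`. -/
inductive Conv : List ℕ → ℝ → ℝ → ℝ → ℝ → Prop
  | nil : Conv [] 0 1 1 0
  | snoc {l : List ℕ} {p p' q q' : ℝ} {a : ℕ} (h : Conv l p p' q q') (ha : 2 ≤ a) :
      Conv (l ++ [a]) (a * p + p') p (a * q + q') q

theorem Conv.pos {l : List ℕ} {p p' q q' : ℝ} (h : Conv l p p' q q') : 0 < q ∧ 0 ≤ q' := by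
  induction h with
  | nil => simp
  | snoc h ha ih =>
    obtain ⟨h1, h2⟩ := ih
    have : (0 : ℝ) < (_ : ℕ) := Nat.cast_pos.2 (lt_of_lt_of_le two_pos ha)
    exact ⟨by positivity, h1.le⟩

theorem Conv.det {l : List ℕ} {p p' q q' : ℝ} (h : Conv l p p' q q') :
    p' * q - p * q' = (-1) ^ l.length := by
  induction h with
  | nil => simp
  | snoc h ha ih =>
    rw [List.length_append, List.length_singleton, pow_succ, ← ih]
    ring

/-- The value `[0; a₁, …, aₙ₋₁, aₙ + z]` of a continued fraction whose last two convergents are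
`p / q` and `p' / q'`. -/
def tailVal (p p' q q' z : ℝ) : ℝ := (p + p' * z) / (q + q' * z)

theorem tailVal_snoc {p p' q q' a z : ℝ} (hq : 0 < q) (hq' : 0 ≤ q') (ha : 0 < a)
    (hz : 0 ≤ z) :
    tailVal (a * p + p') p (a * q + q') q z = tailVal p p' q q' (1 / (a + z)) := by
  have h1 : 0 < a + z := by linarith
  have h2 : 0 < a * q + q' + q * z := by positivity
  have h3 : 0 < q + q' * (1 / (a + z)) := by positivity
  unfold tailVal
  rw [div_eq_div_iff h2.ne' h3.ne']
  field_simp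
  ring

theorem cf_nonneg (l : List ℕ) : 0 ≤ cf l := by
  induction l with
  | nil => simp [cf]
  | cons a l ih => unfold cf; positivity

theorem Conv.cf_append {l : List ℕ} {p p' q q' : ℝ} (h : Conv l p p' q q') (m : List ℕ) :
    cf (l ++ m) = tailVal p p' q q' (cf m) := by
  induction h generalizing m with
  | nil => simp [tailVal]
  | snoc h ha ih =>
    rw [List.append_assoc, ih, tailVal_snoc h.pos.1 h.pos.2
      (Nat.cast_pos.2 (lt_of_lt_of_le two_pos ha)) (cf_nonneg m)]
    simp [cf]

theorem Conv.cf_eq {l : List ℕ} {p p' q q' : ℝ} (h : Conv l p p' q q') :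
    cf l = tailVal p p' q q' 0 := by
  simpa [cf] using h.cf_append []

/-- The Gauss map recovers the tail. Entries `≥ 2` make this hold for `z = 0` as well, that is
for the finite continued fraction itself. -/
theorem Conv.gaussIter_tailVal {l : List ℕ} {p p' q q' : ℝ} (h : Conv l p p' q q') {z : ℝ}
    (hz : 0 ≤ z) (hz1 : z < 1) : gaussIter (tailVal p p' q q' z) l.length = z := by
  induction h generalizing z with
  | nil => simpa [gaussIter, tailVal] using Int.fract_eq_self.2 ⟨hz, hz1⟩
  | @snoc l p p' q q' a h ha ih =>
    have ha' : (2 : ℝ) ≤ a := by exact_mod_cast ha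
    rw [tailVal_snoc h.pos.1 h.pos.2 (by linarith) hz, List.length_append,
      List.length_singleton, gaussIter, ih (by positivity), one_div_one_div,
      Int.fract_natCast_add]
    · exact Int.fract_eq_self.2 ⟨hz, hz1⟩
    · rw [div_lt_one (by linarith)]
      linarith

theorem Conv.tailVal_sub {l : List ℕ} {p p' q q' z w : ℝ} (h : Conv l p p' q q')
    (hz : 0 ≤ z) (hw : 0 ≤ w) :
    tailVal p p' q q' z - tailVal p p' q q' w
      = (-1) ^ l.length * ((z - w) / ((q + q' * z) * (q + q' * w))) := by
  obtain ⟨hq, hq'⟩ := h.pos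
  have h1 : 0 < q + q' * z := by positivity
  have h2 : 0 < q + q' * w := by positivity
  rw [← h.det]
  unfold tailVal
  field_simp
  ring

/-- A small deviation `d` from `p / q`, on the appropriate side, is produced by a tail
`z ∈ [0, 1)`. -/
theorem exists_tail {q q' d : ℝ} (hq : 0 < q) (hq' : 0 ≤ q') (hd : 0 ≤ d)
    (hd1 : d * (q * (q + q')) < 1) :
    ∃ z, 0 ≤ z ∧ z < 1 ∧ z / ((q + q' * z) * q) = d := by
  have h1 : 0 < 1 - d * (q * q') := by nlinarith [mul_nonneg hd (sq_nonneg q)]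
  refine ⟨d * q ^ 2 / (1 - d * (q * q')), by positivity, ?_, ?_⟩
  · rw [div_lt_one h1]; nlinarith
  · obtain ⟨z, hz⟩ : ∃ z, z = d * q ^ 2 / (1 - d * (q * q')) := ⟨_, rfl⟩
    have hz0 : 0 ≤ z := by rw [hz]; positivity
    rw [← hz, div_eq_iff (by positivity)]
    rw [eq_div_iff h1.ne'] at hz
    linear_combination hz

/-! ### The invariant -/

/-- The invariant after `n` steps: `bs` and `cs` are the digits found so far, with denominators
`q, q'` and `Q, Q'`, the denominators of `cs` are at least those of `bs`, and `α - [0; bs]` is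
`[0; cs]` with a tail `t ∈ [0, 1)` added to its last digit. -/
structure State (α : ℝ) (n : ℕ) (bs cs : List ℕ) (q q' Q Q' t : ℝ) : Prop where
  lb : bs.length = n
  lc : cs.length = n
  hb : ∃ p p', Conv bs p p' q q'
  hc : ∃ P P', Conv cs P P' Q Q' ∧ α = cf bs + tailVal P P' Q Q' t
  ht : 0 ≤ t
  ht1 : t < 1
  hqQ' : q' ≤ Q'
  hqQ : q ≤ Q

/-! ### Inequalities between denominators -/

/-- The inequality between denominators that forces the next digits to satisfy `b < c`. -/
def Dominates (q q' Q Q' : ℝ) : Prop := q * (q - q') < Q' * (Q + Q')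

theorem dominates_iff {q q' Q Q' : ℝ} :
    Dominates q q' Q Q' ↔ q * (q - q') < Q' * (Q + Q') := Iff.rfl

/-- If the current denominators satisfy `Dominates`, the next digits satisfy `b < c`. Here `Z`
and `W` are the reciprocals of the deviations of `α` from `[0; bs] + [0; cs]` and from
`[0; bs, b] + [0; cs]`, so that `hW` reads `1 / W = 1 / Z - 1 / (q * (q * b + q'))`; with
`W = Q * (Q * U + Q')` the conclusion is `b + 1 ≤ U`, where `c = ⌊U⌋`. -/
theorem core_growth {q q' Q Q' b Z W : ℝ} (hq : 0 < q) (hQ : 0 < Q)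
    (hQ' : 0 ≤ Q') (hP : Dominates q q' Q Q')
    (hZN : Q * (Q + Q') < Z) (hZM : Z < q * (q * b + q'))
    (hMZ : q * (q * b + q') - q ^ 2 ≤ Z)
    (hW : W * (q * (q * b + q') - Z) = Z * (q * (q * b + q'))) :
    Q * (Q * (b + 1) + Q') ≤ W := by
  rw [dominates_iff] at hP
  by_contra! hlt
  obtain ⟨M, hM⟩ : ∃ M, M = q * (q * b + q') := ⟨_, rfl⟩
  obtain ⟨R, hR⟩ : ∃ R, R = Q * (Q * (b + 1) + Q') := ⟨_, rfl⟩
  obtain ⟨N, hN⟩ : ∃ N, N = Q * (Q + Q') := ⟨_, rfl⟩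
  rw [← hM] at hZM hMZ hW
  rw [← hR] at hlt
  rw [← hN] at hZN
  have hNpos : 0 < N := by rw [hN]; positivity
  have hR' : q ^ 2 * R = q ^ 2 * N + Q ^ 2 * (M - q * q') := by rw [hR, hN, hM]; ring
  have h1 : Z * (M + R) < R * M := by nlinarith [mul_lt_mul_of_pos_right hlt (sub_pos.2 hZM)]
  have hMR : 0 < M + R := by
    have : 0 < W * (M - Z) := by rw [hW]; exact mul_pos (by linarith) (by linarith)
    have : 0 < W := pos_of_mul_pos_left this (by linarith)
    linarith
  have hQ2 : 0 < Q ^ 2 := by positivity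
  have hP' : 0 ≤ Q ^ 2 * (Q' * (Q + Q') - q * (q - q')) := by
    apply mul_nonneg hQ2.le; linarith
  -- `Z` exceeds both `N` and `M - q ^ 2`, and `Z * (M + R)` increases with `Z`, so it is enough
  -- to contradict `h1` with `Z` replaced by the larger of the two bounds.
  rcases le_total N (M - q ^ 2) with h | h
  · have h2 : (M - q ^ 2) * (M + R) < R * M :=
      lt_of_le_of_lt (mul_le_mul_of_nonneg_right hMZ hMR.le) h1
    obtain ⟨k, hk⟩ : ∃ k, k = M - q ^ 2 - N := ⟨_, rfl⟩
    have hk0 : 0 ≤ k := by linarith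
    have hM' : M = N + q ^ 2 + k := by linarith
    have key : M * (M - q ^ 2) - q ^ 2 * R
        = Q ^ 2 * (Q' * (Q + Q') - q * (q - q')) + k * (Q ^ 2 + 2 * Q * Q' + q ^ 2) + k ^ 2 := by
      rw [hR', hM', hN]; ring
    have : 0 ≤ k * (Q ^ 2 + 2 * Q * Q' + q ^ 2) + k ^ 2 := by positivity
    nlinarith
  · have h2 : N * (M + R) < R * M :=
      lt_of_le_of_lt (mul_le_mul_of_nonneg_right hZN.le hMR.le) h1
    obtain ⟨j, hj⟩ : ∃ j, j = M - N := ⟨_, rfl⟩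
    have hj0 : 0 < j := by linarith
    have hj1 : 0 ≤ q ^ 2 - j := by linarith
    have hM' : M = N + j := by linarith
    have key : q ^ 2 * (N * M - R * (M - N))
        = (q ^ 2 - j) * (Q ^ 2 * (Q + Q') ^ 2 + j * Q ^ 2)
          + j * (Q ^ 2 * (Q' * (Q + Q') - q * (q - q'))) := by
      have : q ^ 2 * (N * M - R * (M - N)) = q ^ 2 * N * M - (q ^ 2 * R) * (M - N) := by ring
      rw [this, hR', hM', hN]; ring
    have h3 : 0 ≤ q ^ 2 * (N * M - R * (M - N)) := by
      rw [key]
      have := mul_nonneg hj0.le hP'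
      positivity
    have h4 : 0 ≤ N * M - R * (M - N) := nonneg_of_mul_nonneg_right h3 (by positivity)
    nlinarith

/-- Whatever the current denominators, the next ones `q * b + q'` and `Q * c + Q'` satisfy
`Dominates`. -/
theorem core_dominates {q q' Q Q' b c Z W : ℝ} (hq : 0 < q) (hq' : 0 ≤ q') (hb : 1 ≤ b)
    (hZ : 0 < Z) (hZM : Z < q * (q * b + q'))
    (hMZ : q * (q * b + q') - q ^ 2 ≤ Z)
    (hW : W * (q * (q * b + q') - Z) = Z * (q * (q * b + q')))
    (hc : W < Q * (Q * (c + 1) + Q')) :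
    Dominates (b * q + q') q (c * Q + Q') Q := by
  have hM : 0 < q * (q * b + q') := by positivity
  have hWpos : 0 < W :=
    pos_of_mul_pos_left (hW ▸ mul_pos hZ hM) (by linarith)
  have h1 : (q * (q * b + q') - q ^ 2) * (q * (q * b + q')) ≤ W * q ^ 2 := by
    calc _ ≤ Z * (q * (q * b + q')) := mul_le_mul_of_nonneg_right hMZ hM.le
      _ = W * (q * (q * b + q') - Z) := hW.symm
      _ ≤ W * q ^ 2 := mul_le_mul_of_nonneg_left (by linarith) hWpos.le
  have h2 : (b * q + q') * (b * q + q' - q) ≤ W := by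
    refine le_of_mul_le_mul_right ?_ (pow_pos hq 2)
    linarith [h1]
  rw [dominates_iff]
  linarith

/-- The relation between the complete quotients `1 / s`, `1 / t`, `1 / u` around one step, in
terms of `Z` and `W`. The equation `hst` says that `s` and `t` describe the same deviation, and
`hu` that `u` describes what remains of it after the digit `b` has been chosen. -/
theorem step_identities {q q' Q Q' b s t u : ℝ} (hq : 0 < q) (hq' : 0 ≤ q') (hQ : 0 < Q)
    (hQ' : 0 ≤ Q') (hb : 0 < b) (hs : 0 < s) (ht : 0 < t) (ht1 : t < 1) (hu : 0 < u)
    (hst : s / ((q + q' * s) * q) = t / ((Q + Q' * t) * Q))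
    (hus : u / ((Q + Q' * u) * Q) = (s - 1 / b) / ((q + q' * s) * (q + q' * (1 / b)))) :
    Q * (Q + Q') < q * (q * (1 / s) + q') ∧
      Q * (Q * (1 / u) + Q') * (q * (q * b + q') - q * (q * (1 / s) + q'))
        = q * (q * (1 / s) + q') * (q * (q * b + q')) := by
  constructor
  · have hZ : q * (q * (1 / s) + q') = Q * (Q * (1 / t) + Q') := by
      have e1 : q * (q * (1 / s) + q') = (s / ((q + q' * s) * q))⁻¹ := by field_simp
      have e2 : Q * (Q * (1 / t) + Q') = (t / ((Q + Q' * t) * Q))⁻¹ := by field_simp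
      rw [e1, e2, hst]
    rw [hZ]
    have : 1 < 1 / t := by rw [lt_div_iff₀ ht]; linarith
    gcongr
    nlinarith
  · have h1 : 0 < q + q' * s := by positivity
    have h2 : 0 < Q + Q' * u := by positivity
    have h3 : 0 < q * b + q' := by positivity
    have e3 : (s - 1 / b) / ((q + q' * s) * (q + q' * (1 / b)))
        = (s * b - 1) / ((q + q' * s) * (q * b + q')) := by
      field_simp
    rw [e3, div_eq_div_iff (by positivity) (by positivity)] at hus
    field_simp
    linear_combination (-q) * hus

/-! ### One step of the algorithm -/

/-- The second alternative in `hor` is the start of the algorithm, where `Dominates` fails. -/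
theorem step {α : ℝ} {n : ℕ} {bs cs : List ℕ} {q q' Q Q' t : ℝ}
    (h : State α n bs cs q q' Q Q' t)
    (hdef : pqDefined (α - cf cs) (n + 1))
    (hor : Dominates q q' Q Q' ∨ n = 0 ∧ q = 1 ∧ q' = 0 ∧ Q = 1 ∧ Q' = 0) {b c : ℕ}
    (hbdef : b = pq (α - cf cs) (n + 1) + 1)
    (hcdef : c = pq (α - cf (bs ++ [b])) (n + 1)) :
    (∃ q₁ q₁' Q₁ Q₁' t₁, State α (n + 1) (bs ++ [b]) (cs ++ [c]) q₁ q₁' Q₁ Q₁' t₁ ∧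
      Dominates q₁ q₁' Q₁ Q₁') ∧ (n ≠ 0 → b < c) := by
  obtain ⟨lb, lc, ⟨p, p', hb⟩, ⟨P, P', hc, hα⟩, ht, ht1, hqQ', hqQ⟩ := h
  obtain ⟨hq, hq'⟩ := hb.pos
  obtain ⟨hQ, hQ'⟩ := hc.pos
  obtain ⟨d, hd⟩ : ∃ d, d = t / ((Q + Q' * t) * Q) := ⟨_, rfl⟩
  have hd0 : 0 ≤ d := by rw [hd]; positivity
  have hdQ : d * (Q * (Q + Q')) < 1 := by
    rw [hd, div_mul_eq_mul_div, div_lt_one (by positivity)]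
    nlinarith [mul_pos hQ hQ]
  have hdq : d * (q * (q + q')) < 1 := by
    refine lt_of_le_of_lt ?_ hdQ
    gcongr
  -- The deviation of `α - [0; cs]` from `[0; bs]` is carried by a tail `s` of `bs`.
  obtain ⟨s, hs0, hs1, hs⟩ := exists_tail hq hq' hd0 hdq
  have hβ : α - cf cs = tailVal p p' q q' s := by
    have e1 := hc.tailVal_sub ht le_rfl
    have e2 := hb.tailVal_sub hs0 le_rfl
    simp only [sub_zero, mul_zero, add_zero] at e1 e2
    rw [hs, hd, lb] at e2
    rw [lc] at e1
    rw [hα, hb.cf_eq, hc.cf_eq]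
    linarith
  have hgs : gaussIter (α - cf cs) n = s := by
    rw [hβ, ← lb]; exact hb.gaussIter_tailVal hs0 hs1
  have hspos : 0 < s := by
    refine lt_of_le_of_ne hs0 fun h0 => hdef ?_
    rw [Nat.add_sub_cancel, hgs, h0]
  have hdpos : 0 < d := by rw [← hs]; positivity
  have htpos : 0 < t := by
    refine lt_of_le_of_ne ht fun h0 => ?_
    rw [← h0, zero_div] at hd
    exact hdpos.ne' hd
  have hb' : b = ⌊1 / s⌋₊ + 1 := by rw [hbdef, pq, Nat.add_sub_cancel, hgs]
  have hs1' : 1 < 1 / s := by rw [lt_div_iff₀ hspos]; linarith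
  have hb2 : 2 ≤ b := by
    have : 1 ≤ ⌊1 / s⌋₊ := Nat.le_floor (by simpa using hs1'.le)
    omega
  have hbs : 1 / s < b := by rw [hb']; push_cast; exact Nat.lt_floor_add_one _
  have hbs' : (b : ℝ) - 1 ≤ 1 / s := by
    rw [hb']; push_cast
    have := Nat.floor_le (a := 1 / s) (by positivity)
    linarith
  have hb2' : (2 : ℝ) ≤ b := by exact_mod_cast hb2
  have hb0 : (0 : ℝ) < b := by linarith
  have hsb : 1 / (b : ℝ) < s := by
    rw [div_lt_iff₀ hspos] at hbs
    rw [div_lt_iff₀ hb0]; linarith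
  -- The remaining deviation `e` lies on the same side as `d` and is smaller.
  obtain ⟨e, he⟩ : ∃ e, e = (s - 1 / b) / ((q + q' * s) * (q + q' * (1 / b))) := ⟨_, rfl⟩
  have he0 : 0 < e := by
    rw [he]
    have := sub_pos.2 hsb
    positivity
  have hed : e ≤ d := by
    rw [he, ← hs]
    have h1 : 0 < 1 / (b : ℝ) := by positivity
    gcongr
    · linarith
    · nlinarith [mul_nonneg hq' h1.le]
  have heQ : e * (Q * (Q + Q')) < 1 :=
    lt_of_le_of_lt (mul_le_mul_of_nonneg_right hed (by positivity)) hdQ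
  obtain ⟨u, hu0, hu1, hu⟩ := exists_tail hQ hQ' he0.le heQ
  have hupos : 0 < u := by
    refine lt_of_le_of_ne hu0 fun h0 => ?_
    rw [← h0, zero_div] at hu
    exact he0.ne hu
  have hcfb : cf (bs ++ [b]) = tailVal p p' q q' (1 / b) := by
    rw [hb.cf_append]; simp [cf]
  have hγ : α - cf (bs ++ [b]) = tailVal P P' Q Q' u := by
    have e1 := hc.tailVal_sub hu0 le_rfl
    have e2 := hb.tailVal_sub hs0 (w := 1 / (b : ℝ)) (by positivity)
    simp only [sub_zero, mul_zero, add_zero] at e1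
    rw [hu, lc] at e1
    rw [← he, lb] at e2
    rw [hcfb]
    rw [← hc.cf_eq] at e1
    linarith
  have hgu : gaussIter (α - cf (bs ++ [b])) n = u := by
    rw [hγ, ← lc]; exact hc.gaussIter_tailVal hu0 hu1
  have hc' : c = ⌊1 / u⌋₊ := by rw [hcdef, pq, Nat.add_sub_cancel, hgu]
  have hcu : (c : ℝ) ≤ 1 / u := by rw [hc']; exact Nat.floor_le (by positivity)
  have hcu' : 1 / u < c + 1 := by rw [hc']; exact Nat.lt_floor_add_one _
  obtain ⟨hZN, hW⟩ := step_identities hq hq' hQ hQ' hb0 hspos htpos ht1 hupos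
    (hs.trans hd) (hu.trans he)
  have hZM : q * (q * (1 / s) + q') < q * (q * b + q') := by gcongr
  have hMZ : q * (q * b + q') - q ^ 2 ≤ q * (q * (1 / s) + q') := by
    nlinarith [mul_le_mul_of_nonneg_left hbs' (sq_nonneg q)]
  have hdom : Dominates (b * q + q') q (c * Q + Q') Q :=
    core_dominates hq hq' (by linarith) (by positivity) hZM hMZ hW (by gcongr)
  have hlt : Dominates q q' Q Q' → b < c := fun hP => by
    have h1 := core_growth hq hQ hQ' hP hZN hZM hMZ hW
    have h2 : (b : ℝ) + 1 ≤ 1 / u := by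
      have := le_of_mul_le_mul_left h1 hQ
      exact le_of_mul_le_mul_left (by linarith) hQ
    rw [hc']
    exact Nat.le_floor (by push_cast; exact h2)
  have hbc : b ≤ c := by
    rcases hor with hP | ⟨-, rfl, rfl, rfl, rfl⟩
    · exact (hlt hP).le
    · -- At the first step `Dominates` for the new denominators reads `b * (b - 1) < c + 1`.
      have h1 : (b : ℝ) < c + 1 := by
        simp only [Dominates, mul_one, add_zero, one_mul] at hdom
        linarith [mul_nonneg hb0.le (sub_nonneg.2 hb2')]
      exact Nat.lt_succ_iff.1 (by exact_mod_cast h1)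
  have hbc' : (b : ℝ) ≤ c := by exact_mod_cast hbc
  refine ⟨⟨b * q + q', q, c * Q + Q', Q, 1 / u - c, ?_, hdom⟩, fun hn => ?_⟩
  · refine ⟨by simp [lb], by simp [lc], ⟨_, _, hb.snoc hb2⟩,
      ⟨_, _, hc.snoc (hb2.trans hbc), ?_⟩, by linarith, by linarith, hqQ, by gcongr⟩
    rw [tailVal_snoc hQ hQ' (by linarith) (by linarith), add_sub_cancel, one_div_one_div, ← hγ]
    ring
  · exact hlt (hor.resolve_right fun h0 => hn h0.1)

/-! ### Induction along the algorithm -/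

theorem shulgaList_succ (α : ℝ) (n : ℕ) : ∃ b c : ℕ,
    shulgaList α (n + 1) = shulgaList α n ++ [(b, c)] ∧
    b = pq (α - cf (cList α n)) (n + 1) + 1 ∧
    c = pq (α - cf (bList α n ++ [b])) (n + 1) :=
  ⟨_, _, rfl, rfl, rfl⟩

theorem state_zero {α : ℝ} (hα : α ∈ Set.Icc (0 : ℝ) 1)
    (hdef : pqDefined (α - cf (cList α 0)) 1) :
    State α 0 (bList α 0) (cList α 0) 1 0 1 0 α := by
  refine ⟨rfl, rfl, ⟨_, _, Conv.nil⟩, ⟨_, _, Conv.nil, by simp [bList, shulgaList, cf, tailVal]⟩,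
    hα.1, lt_of_le_of_ne hα.2 ?_, le_rfl, le_rfl⟩
  -- For `α = 1` the fractional part vanishes, so the first partial quotient is undefined.
  rintro rfl
  exact hdef (by simp [cList, shulgaList, cf, gaussIter])

theorem state_succ {α : ℝ} (hα : α ∈ Set.Icc (0 : ℝ) 1) (n : ℕ)
    (hdef : shulgaDefined α (n + 1)) :
    (∃ q q' Q Q' t, State α (n + 1) (bList α (n + 1)) (cList α (n + 1)) q q' Q Q' t ∧
      Dominates q q' Q Q') ∧ (n ≠ 0 → shulgaB α (n + 1) < shulgaC α (n + 1)) := by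
  induction n with
  | zero =>
    obtain ⟨b, c, hL, hb, hc⟩ := shulgaList_succ α 0
    have h0 := (hdef 0 one_pos).1
    obtain ⟨h, -⟩ := step (state_zero hα h0) h0 (.inr ⟨rfl, rfl, rfl, rfl, rfl⟩) hb hc
    refine ⟨?_, fun h => absurd rfl h⟩
    simpa [bList, cList, hL] using h
  | succ n ih =>
    obtain ⟨⟨q, q', Q, Q', t, hS, hP⟩, -⟩ := ih fun k hk => hdef k (hk.trans (Nat.lt_succ_self _))
    obtain ⟨b, c, hL, hb, hc⟩ := shulgaList_succ α (n + 1)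
    obtain ⟨h, hlt⟩ := step hS (hdef (n + 1) (Nat.lt_succ_self _)).1 (.inl hP) hb hc
    refine ⟨?_, fun _ => ?_⟩
    · simpa [bList, cList, hL] using h
    · simpa [shulgaB, shulgaC, hL] using hlt (Nat.succ_ne_zero n)

/-- for `n ≥ 2`, the Shulga sequences satisfy `cₙ > bₙ`. -/
theorem stmt2 (α : ℝ) (hα : α ∈ Set.Icc (0 : ℝ) 1) (n : ℕ) (hn : 2 ≤ n)
    (hdef : shulgaDefined α n) : shulgaB α n < shulgaC α n := by
  obtain ⟨m, rfl⟩ : ∃ m, n = m + 1 := ⟨n - 1, by omega⟩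
  exact (state_succ hα m hdef).2 (by omega)

end ShulgaPaper
end
end

section
/- For any α ∈ [0,1] and any n ≥ 1 for which the (n+1)-th step of Shulga's algorithm applied to α is defined, the Shulga sequences satisfy b_{n+1} ≥ b_n. -/
/-!
After `n` steps of the algorithm `α = [0; c₁, …, cₙ] + [0; b₁, …, bₙ + Θ]` with `0 ≤ Θ < 1`, and the
next digit is `bₙ₊₁ = ⌊1 / Θ⌋ + 1`. So `bₙ₊₁ ≥ bₙ` follows from `1 / Θ > bₙ - 1`, and everything rests
on a lower bound for `1 / Θ`.

Write `q, q'` and `r, r'` for the last two convergent denominators of `[0; b₁, …, bₙ]` and of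
`[0; c₁, …, cₙ]`, let `b, c` be the next digits, `Q = b q + q'`, `R = c r + r'`, and `1 / Θ = b - v`
with `0 < v ≤ 1`. The difference formula for continued fractions with a common beginning (`Mob`)
shows that `α - [0; b₁, …, bₙ₊₁] = [0; c₁, …, cₙ, c + y]` with `0 ≤ y < 1` and
`(R + y r) r v = (Q - v q) Q`; applied once more, it expresses the new tail `Θ₁` by
`Q (Q / Θ₁ + q) = R (R / y + r)` when `y ≠ 0`, while `Θ₁ = 0` when `y = 0`. In the former case
`y < 1` gives `Q (Q / Θ₁ + q) > R (R + r)`, so `1 / Θ₁ > b - 1` follows from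
`R (R + r) ≥ Q ((b - 1) Q + q)`.

For `n ≥ 1` this inequality (`key_ineq`) is deduced from `(R + r) r v > (Q - v q) Q` and two facts
about the previous steps, `q (Q - v q) > r (r + r')` and `r' (r + r') > (q - q') q`. The second fact
is essential, since `y` may be close to `1` and cruder bounds then lose a term of the same order.
For `n = 0` the second fact fails, and the inequality comes from `c₁ ≥ b₁ (b₁ - 1)`, which uses
that `c₁` is an integer. Both facts are reproduced by a step of the algorithm, so they are carried
along in the invariant `Inv`, whose preservation is `Inv.step`.
-/

noncomputable section

namespace ShulgaPaper

open Filter Topology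

/-! ### Continued fractions with a real tail -/

/-- `cfT l t` is the continued fraction `[0; a₁, …, aₙ + t]` for `l = [a₁, …, aₙ]`: the digits `l`
are followed by a real tail `t`, to be thought of as an iterate of the Gauss map. -/
def cfT : List ℕ → ℝ → ℝ
  | [], t => t
  | a :: l, t => 1 / ((a : ℝ) + cfT l t)

lemma cfT_zero (l : List ℕ) : cfT l 0 = cf l := by
  induction l with
  | nil => rfl
  | cons a l ih => simp [cfT, cf, ih]

lemma cfT_append (l : List ℕ) (a : ℕ) (t : ℝ) : cfT (l ++ [a]) t = cfT l (1 / (a + t)) := by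
  induction l with
  | nil => rfl
  | cons b l ih => simp only [List.cons_append, cfT, ih]

lemma cfT_nonneg (l : List ℕ) {t : ℝ} (ht : 0 ≤ t) : 0 ≤ cfT l t := by
  induction l with
  | nil => exact ht
  | cons a l ih => simp only [cfT]; positivity

lemma gaussIter_inv {a : ℕ} (ha : 1 ≤ a) {z : ℝ} (hz : 0 ≤ z) (n : ℕ) :
    gaussIter (1 / ((a : ℝ) + z)) (n + 1) = gaussIter z n := by
  induction n with
  | zero =>
    have ha' : (1 : ℝ) ≤ a := by exact_mod_cast ha
    simp only [gaussIter]
    rcases lt_or_ge 1 ((a : ℝ) + z) with h | h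
    · have h1 : Int.fract (1 / ((a : ℝ) + z)) = 1 / ((a : ℝ) + z) := by
        rw [Int.fract_eq_self]
        exact ⟨by positivity, by rw [div_lt_one (by linarith)]; exact h⟩
      rw [h1, one_div_one_div, Int.fract_natCast_add]
    · -- Here `a + z = 1`: the iterate of `1` is `0`, in agreement with `1 / 0 = 0` and `z = 0`.
      have hz0 : z = 0 := by linarith
      have haz : (a : ℝ) = 1 := by linarith
      simp [hz0, haz]
  | succ n ih => rw [gaussIter, ih, gaussIter]

/-- The Gauss map strips off the digits `l` and returns the tail, even where `[0; l]` is not the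
canonical expansion (`t = 0` and the last digit equal to `1`). -/
lemma gaussIter_cfT (l : List ℕ) (hl : ∀ a ∈ l, 1 ≤ a) {t : ℝ} (h0 : 0 ≤ t) (h1 : t < 1) :
    gaussIter (cfT l t) l.length = t := by
  induction l with
  | nil => simpa [gaussIter, cfT] using Int.fract_eq_self.2 ⟨h0, h1⟩
  | cons a l ih =>
    rw [cfT, List.length_cons, gaussIter_inv (hl a (by simp)) (cfT_nonneg l h0)]
    exact ih fun b hb => hl b (by simp [hb])

/-- The Möbius map `t ↦ [0; l, t]` has denominator `q + t q'` and determinant `ε`. For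
`l = [a₁, …, aₙ]` this means that `q = qₙ` and `q' = qₙ₋₁` are the last two convergent denominators
and `ε = (-1)ⁿ`; numerators are eliminated by recording only the differences of values. -/
def Mob (l : List ℕ) (ε q q' : ℝ) : Prop :=
  ∀ s t : ℝ, 0 ≤ s → 0 ≤ t →
    cfT l s - cfT l t = ε * (s - t) / ((q + s * q') * (q + t * q'))

lemma Mob.append {l : List ℕ} {ε q q' : ℝ} (h : Mob l ε q q') (hq : 0 < q) (hq' : 0 ≤ q')
    {a : ℕ} (ha : 1 ≤ a) : Mob (l ++ [a]) (-ε) (a * q + q') q := by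
  intro s t hs ht
  have ha' : (0 : ℝ) < a := by exact_mod_cast ha
  rw [cfT_append, cfT_append, h _ _ (by positivity) (by positivity)]
  have h1 : 0 < (a : ℝ) + s := by positivity
  have h2 : 0 < (a : ℝ) + t := by positivity
  have h3 : 0 < q * (a + s) + q' := by positivity
  have h4 : 0 < q * (a + t) + q' := by positivity
  have e1 : q + 1 / ((a : ℝ) + s) * q' = (q * (a + s) + q') / (a + s) := by field_simp
  have e2 : q + 1 / ((a : ℝ) + t) * q' = (q * (a + t) + q') / (a + t) := by field_simp
  have e3 : (a : ℝ) * q + q' + s * q = q * (a + s) + q' := by ring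
  have e4 : (a : ℝ) * q + q' + t * q = q * (a + t) + q' := by ring
  rw [e1, e2, e3, e4]
  field_simp
  ring

/-- Adding a perturbation `ε κ` to the value `[0; l]` turns the tail `0` into
`κ q² / (1 - κ q q')`. -/
lemma Mob.shift {l : List ℕ} {ε q q' : ℝ} (h : Mob l ε q q') (hq : 0 < q) (hq' : 0 ≤ q')
    {κ : ℝ} (hκ : 0 ≤ κ) (hd : κ * q * q' < 1) :
    cfT l 0 + ε * κ = cfT l (κ * q ^ 2 / (1 - κ * q * q')) := by
  have hd' : 0 < 1 - κ * q * q' := by linarith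
  have := h (κ * q ^ 2 / (1 - κ * q * q')) 0 (by positivity) le_rfl
  have e : q + κ * q ^ 2 / (1 - κ * q * q') * q' = q / (1 - κ * q * q') := by
    obtain ⟨d, hd₁⟩ : ∃ d, d = 1 - κ * q * q' := ⟨_, rfl⟩
    rw [← hd₁] at hd' ⊢
    field_simp
    rw [hd₁]
    ring
  rw [e] at this
  have e2 : ε * (κ * q ^ 2 / (1 - κ * q * q') - 0) / (q / (1 - κ * q * q') * (q + 0 * q'))
      = ε * κ := by
    field_simp
    ring
  linarith

/-! ### The inequality behind the monotonicity -/

/-- The growth estimate for `n ≥ 1`, in terms of the consecutive denominators `q', q, Q = b q + q'`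
and `r', r, R`. The number `v ∈ (0, 1]` is the distance from the complete quotient `b - v` to `b`,
and `Q - v q` is the corresponding real denominator. -/
lemma key_ineq {q q' r r' b v Q R : ℝ} (hq : 0 < q) (hq' : 0 ≤ q') (hqq : q' ≤ q)
    (hr : 0 < r) (hr' : 0 ≤ r') (hb : 2 ≤ b) (hv : 0 < v) (hv1 : v ≤ 1) (hQ : Q = b * q + q')
    (hI : (q - q') * q < r' * (r + r')) (hM : r * (r + r') < q * (Q - v * q))
    (hR : (Q - v * q) * Q < (R + r) * r * v) :
    Q * ((b - 1) * Q + q) ≤ R * (R + r) := by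
  obtain ⟨P, hP⟩ : ∃ P, P = Q - v * q := ⟨_, rfl⟩
  rw [← hP] at hM hR
  have hQ0 : q < Q := by nlinarith
  have hP0 : 0 < P := by nlinarith
  have hQp : 0 < Q := by linarith
  -- Homogenised in `q`; an equality for `v = 1`.
  have hA : v ^ 2 * ((b - 1) * Q + q) * q ≤ P ^ 2 + (q - q') * Q := by
    have h1 : (v * (Q - q)) ^ 2 ≤ P ^ 2 := by
      apply pow_le_pow_left₀ (mul_nonneg hv.le (by linarith))
      rw [hP]
      nlinarith
    have h2 : v ^ 2 * ((q - q') * Q) ≤ (q - q') * Q := by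
      have : 0 ≤ (q - q') * Q := mul_nonneg (by linarith) hQp.le
      have hv2 : v ^ 2 ≤ 1 := by nlinarith
      nlinarith
    have h3 : v ^ 2 * ((b - 1) * Q + q) * q = (v * (Q - q)) ^ 2 + v ^ 2 * ((q - q') * Q) := by
      rw [hQ]; ring
    linarith
  -- `Z² - r² Z - r² r' (r + r')` is increasing for `Z ≥ r (r + r')` and vanishes there.
  have hZ : r ^ 2 * (q * P + r' * (r + r')) ≤ (q * P) ^ 2 := by
    have h0 : 0 ≤ q * P - r * (r + r') := by linarith
    nlinarith [mul_nonneg h0 (by positivity : (0:ℝ) ≤ q * P), mul_nonneg h0 (mul_nonneg hr.le hr'),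
      mul_nonneg h0 h0]
  have hB : r ^ 2 * (v ^ 2 * ((b - 1) * Q + q) + v * P) ≤ P ^ 2 * Q := by
    have h1 : r ^ 2 * (v ^ 2 * ((b - 1) * Q + q) + v * P) * q ^ 2 ≤
        r ^ 2 * Q * (q * P + r' * (r + r')) := by
      have h2 : (v ^ 2 * ((b - 1) * Q + q) + v * P) * q ^ 2 ≤ Q * (q * P + (q - q') * q) := by
        have h3 := mul_le_mul_of_nonneg_right hA hq.le
        have e2 : (P ^ 2 + (q - q') * Q) * q + v * P * q ^ 2 = Q * (q * P + (q - q') * q) := by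
          rw [hP]; ring
        nlinarith
      have h4 : Q * (q * P + (q - q') * q) ≤ Q * (q * P + r' * (r + r')) :=
        mul_le_mul_of_nonneg_left (by linarith) hQp.le
      have h5 := mul_le_mul_of_nonneg_left (h2.trans h4) (sq_nonneg r)
      nlinarith
    have h6 := mul_le_mul_of_nonneg_right hZ hQp.le
    have hq2 : 0 < q ^ 2 := by positivity
    refine le_of_mul_le_mul_right ?_ hq2
    nlinarith
  have hrv : 0 < r * v := by positivity
  -- `S` is the lower bound for `R + r`.
  obtain ⟨S, hS⟩ : ∃ S, S * (r * v) = P * Q := ⟨P * Q / (r * v), div_mul_cancel₀ _ hrv.ne'⟩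
  have hSR : S < R + r := by
    refine lt_of_mul_lt_mul_right ?_ hrv.le
    rw [hS]; linarith
  have hSr : r ≤ S := by
    refine le_of_mul_le_mul_right ?_ hrv
    rw [hS]
    have : r * (r * v) ≤ r * (r + r') := by
      have := mul_nonneg hr.le hr'
      nlinarith [mul_nonneg (sq_nonneg r) (sub_nonneg.2 hv1)]
    nlinarith
  have h7 : Q * ((b - 1) * Q + q) ≤ (S - r) * S := by
    have hrv2 : 0 < (r * v) ^ 2 := by positivity
    refine le_of_mul_le_mul_right ?_ hrv2
    have e : (S - r) * S * (r * v) ^ 2 = (P * Q - r * (r * v)) * (P * Q) := by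
      rw [← hS]; ring
    rw [e]
    have := mul_le_mul_of_nonneg_left hB hQp.le
    nlinarith
  have h8 : (S - r) * S ≤ R * (R + r) :=
    mul_le_mul (by linarith) hSR.le (by linarith) (by linarith)
  linarith

/-- The growth estimate for `n = 0`. The integrality of the digit `c` improves
`c > b (b - 1) - 1` to `c ≥ b (b - 1)`; for `b = 2` and `c = 2` equality holds. -/
lemma key_ineq_zero {b c : ℕ} {v : ℝ} (hb : 2 ≤ b) (hv : 0 < v) (hv1 : v ≤ 1)
    (h : ((b : ℝ) - v) * b < (c + 1) * v) :
    (b : ℝ) * ((b - 1) * b + 1) ≤ c * (c + 1) := by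
  have hb' : (2 : ℝ) ≤ b := by exact_mod_cast hb
  have h1 : (b : ℝ) * (b - 1) < c + 1 := by
    refine lt_of_mul_lt_mul_right (lt_of_le_of_lt ?_ h) hv.le
    nlinarith [mul_nonneg (sub_nonneg.2 hv1) (mul_self_nonneg (b : ℝ))]
  have e : ((b * (b - 1) : ℕ) : ℝ) = b * (b - 1) := by
    push_cast [Nat.cast_sub (show 1 ≤ b by omega)]
    ring
  have h3 : b * (b - 1) ≤ c := by
    have : b * (b - 1) < c + 1 := by
      rw [← e] at h1
      exact_mod_cast h1
    omega
  have h5 : (b : ℝ) * (b - 1) ≤ c := by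
    rw [← e]
    exact_mod_cast h3
  have h6 : (0 : ℝ) ≤ b * (b - 1) := mul_nonneg (by linarith) (by linarith)
  have h7 : (b : ℝ) * (b - 1) * (b * (b - 1) + 1) ≤ c * (c + 1) :=
    mul_le_mul h5 (by linarith) (by linarith) (by linarith)
  have h8 : (0 : ℝ) ≤ b * (b * (b - 1) + 1) * (b - 2) :=
    mul_nonneg (by positivity) (by linarith)
  linarith

/-! ### The invariant of the algorithm -/

lemma bList_succ (α : ℝ) (n : ℕ) : bList α (n + 1) = bList α n ++ [shulgaB α (n + 1)] := by
  simp [bList, shulgaB, shulgaList]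

lemma cList_succ (α : ℝ) (n : ℕ) : cList α (n + 1) = cList α n ++ [shulgaC α (n + 1)] := by
  simp [cList, shulgaC, shulgaList]

lemma bList_length (α : ℝ) (n : ℕ) : (bList α n).length = n := by
  induction n with
  | zero => rfl
  | succ n ih => simp [bList_succ, ih]

lemma cList_length (α : ℝ) (n : ℕ) : (cList α n).length = n := by
  induction n with
  | zero => rfl
  | succ n ih => simp [cList_succ, ih]

lemma shulgaB_succ (α : ℝ) (n : ℕ) :
    shulgaB α (n + 1) = ⌊1 / gaussIter (α - cf (cList α n)) n⌋₊ + 1 := by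
  simp [shulgaB, shulgaList, pq, cList]

lemma shulgaC_succ (α : ℝ) (n : ℕ) :
    shulgaC α (n + 1) = ⌊1 / gaussIter (α - cf (bList α (n + 1))) n⌋₊ := by
  simp [shulgaC, shulgaList, pq, bList]

/-- The situation after `n` steps: `α = [0; c₁, …, cₙ] + [0; b₁, …, bₙ + Θ]` with `0 ≤ Θ < 1`, where
`q, q'` and `r, r'` are the last two convergent denominators of the `b`'s and of the `c`'s. The
field `alt` separates the start `n = 0` from the later steps. The field `last` is the monotonicity:
`bₙ₊₁ = ⌊1 / Θ⌋ + 1`, and `1 / Θ > bₙ - 1`. -/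
structure Inv_s6 (α : ℝ) (n : ℕ) (ε q q' r r' Θ : ℝ) : Prop where
  mobB : Mob (bList α n) ε q q'
  mobC : Mob (cList α n) ε r r'
  posB : ∀ a ∈ bList α n, 1 ≤ a
  posC : ∀ a ∈ cList α n, 1 ≤ a
  hq : 0 < q
  hq' : 0 ≤ q'
  hqq : q' ≤ q
  hr : 0 < r
  hr' : 0 ≤ r'
  nonneg : 0 ≤ Θ
  lt_one : Θ < 1
  eq : α - cf (cList α n) = cfT (bList α n) Θ
  main : Θ * (r * (r + r')) < q * (q + Θ * q')
  alt : (q = 1 ∧ q' = 0 ∧ r = 1 ∧ r' = 0) ∨ (q - q') * q < r' * (r + r')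
  last : Θ * ((shulgaB α n : ℝ) - 1) < 1

lemma Inv_s6.gauss {α : ℝ} {n : ℕ} {ε q q' r r' Θ : ℝ} (h : Inv_s6 α n ε q q' r r' Θ) :
    gaussIter (α - cf (cList α n)) n = Θ := by
  have := gaussIter_cfT (bList α n) h.posB h.nonneg h.lt_one
  rwa [bList_length, ← h.eq] at this

lemma inv_zero {α : ℝ} (hα : α ∈ Set.Icc (0 : ℝ) 1) (hd : pqDefined (α - cf (cList α 0)) 1) :
    Inv_s6 α 0 1 1 0 1 0 α := by
  have h1 : α < 1 := by
    refine lt_of_le_of_ne hα.2 ?_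
    rintro rfl
    simp [pqDefined, cList, shulgaList, cf, gaussIter] at hd
  have hα0 := hα.1
  refine ⟨?_, ?_, ?_, ?_, one_pos, le_rfl, zero_le_one, one_pos, le_rfl, hα.1, h1, ?_, ?_,
    Or.inl ⟨rfl, rfl, rfl, rfl⟩, ?_⟩
  · intro s t _ _; simp [bList, shulgaList, cfT]
  · intro s t _ _; simp [cList, shulgaList, cfT]
  · simp [bList, shulgaList]
  · simp [cList, shulgaList]
  · simp [bList, cList, shulgaList, cf, cfT]
  · linarith
  · simp [shulgaB, shulgaList]; linarith

/-- One step of the algorithm. Only the existence of `bₙ₊₁` is required: it already forces that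
of `cₙ₊₁`. -/
lemma Inv_s6.step {α : ℝ} {n : ℕ} {ε q q' r r' Θ : ℝ} (h : Inv_s6 α n ε q q' r r' Θ)
    (hd : pqDefined (α - cf (cList α n)) (n + 1)) :
    ∃ ε₁ Q R Θ₁ : ℝ, Inv_s6 α (n + 1) ε₁ Q q R r Θ₁ := by
  have hΘ : 0 < Θ := by
    refine lt_of_le_of_ne h.nonneg ?_
    intro h0
    apply hd
    simp [h.gauss, ← h0]
  obtain ⟨hmB, hmC, hpB, hpC, hq, hq', hqq, hr, hr', -, hΘ1, heq, hmain, halt, -⟩ := id h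
  -- The complete quotient `w = b - v`.
  obtain ⟨w, hw⟩ : ∃ w, w = 1 / Θ := ⟨_, rfl⟩
  have hwΘ : w * Θ = 1 := by rw [hw]; field_simp
  have hw1 : 1 < w := by rw [hw]; exact one_lt_one_div hΘ hΘ1
  obtain ⟨b, hb⟩ : ∃ b, b = shulgaB α (n + 1) := ⟨_, rfl⟩
  have hbf : b = ⌊w⌋₊ + 1 := by rw [hb, shulgaB_succ, h.gauss, hw]
  have hwb : w < b := by rw [hbf]; push_cast; exact Nat.lt_floor_add_one w
  have hbw : (b : ℝ) ≤ w + 1 := by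
    rw [hbf]; push_cast
    linarith [Nat.floor_le (by linarith : 0 ≤ w)]
  have hb2 : 2 ≤ b := by
    have : (1 : ℝ) < b := by linarith
    exact_mod_cast this
  have hb2' : (2 : ℝ) ≤ b := by exact_mod_cast hb2
  obtain ⟨v, hv⟩ : ∃ v, v = b - w := ⟨_, rfl⟩
  have hv0 : 0 < v := by linarith
  have hv1 : v ≤ 1 := by linarith
  obtain ⟨Q, hQ⟩ : ∃ Q, Q = b * q + q' := ⟨_, rfl⟩
  obtain ⟨P, hP⟩ : ∃ P, P = Q - v * q := ⟨_, rfl⟩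
  have hw0 : 0 < w := by linarith
  have hPw : P = w * q + q' := by rw [hP, hQ, hv]; ring
  have hqQ : q ≤ Q := by rw [hQ]; nlinarith only [hq, hq', hb2']
  have hP0 : 0 < P := by rw [hPw]; positivity
  have hQ0 : 0 < Q := by linarith
  have hM : r * (r + r') < q * P := by
    refine lt_of_mul_lt_mul_left ?_ hΘ.le
    have : Θ * (q * P) = q * (q + Θ * q') := by
      rw [hPw]; linear_combination q ^ 2 * hwΘ
    rw [this]; exact hmain
  have hMQ : v * r * (r + r') < P * Q := by
    have h1 : v * (r * (r + r')) ≤ r * (r + r') :=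
      mul_le_of_le_one_left (by positivity) hv1
    nlinarith only [h1, hM, mul_le_mul_of_nonneg_left hqQ hP0.le]
  have hmB' := hmB.append hq hq' (show 1 ≤ b by omega)
  rw [← hQ, hb, ← bList_succ] at hmB'
  -- `α - [0; b₁, …, bₙ₊₁] = [0; c₁, …, cₙ + Φ]`
  obtain ⟨κ, hκ⟩ : ∃ κ, κ = v / (P * Q) := ⟨_, rfl⟩
  have hκ0 : 0 < κ := by rw [hκ]; positivity
  have hκPQ : κ * (P * Q) = v := by rw [hκ]; field_simp
  have hκd : κ * r * (r + r') < 1 := by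
    rw [hκ, div_mul_eq_mul_div, div_mul_eq_mul_div, div_lt_one (by positivity)]
    exact hMQ
  have hκd' : κ * r * r' < 1 := by
    have : 0 < κ * r * r := by positivity
    nlinarith only [this, hκd]
  have hden : 0 < 1 - κ * r * r' := by linarith
  obtain ⟨Φ, hΦ⟩ : ∃ Φ, Φ = κ * r ^ 2 / (1 - κ * r * r') := ⟨_, rfl⟩
  have hΦ0 : 0 < Φ := by rw [hΦ]; positivity
  have hΦ1 : Φ < 1 := by
    rw [hΦ, div_lt_one hden]; nlinarith only [hκd]
  have hΦe : α - cf (bList α (n + 1)) = cfT (cList α n) Φ := by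
    have hb0 : (0 : ℝ) < b := by linarith
    have h1 := hmB Θ (1 / b) hΘ.le (by positivity)
    have h2 := hmC.shift hr hr' hκ0.le hκd'
    rw [← hΦ] at h2
    have h3 : cf (bList α (n + 1)) = cfT (bList α n) (1 / b) := by
      rw [bList_succ, ← cfT_zero, cfT_append, hb, add_zero]
    have hΘw : Θ = 1 / w := by rw [hw, one_div_one_div]
    have h4 : ε * (Θ - 1 / b) / ((q + Θ * q') * (q + 1 / b * q')) = ε * κ := by
      have e1 : q + Θ * q' = P / w := by rw [hΘw, hPw]; field_simp
      have e2 : q + 1 / (b : ℝ) * q' = Q / b := by rw [hQ]; field_simp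
      rw [e1, e2, hΘw, hκ, hv]
      field_simp
    rw [h4] at h1
    rw [cfT_zero] at h2
    rw [h3, ← h2]
    linarith
  have hgc : gaussIter (α - cf (bList α (n + 1))) n = Φ := by
    have := gaussIter_cfT (cList α n) hpC hΦ0.le hΦ1
    rwa [cList_length, ← hΦe] at this
  obtain ⟨c, hc⟩ : ∃ c, c = shulgaC α (n + 1) := ⟨_, rfl⟩
  have hcf : c = ⌊1 / Φ⌋₊ := by rw [hc, shulgaC_succ, hgc]
  have hcle : (c : ℝ) ≤ 1 / Φ := by rw [hcf]; exact Nat.floor_le (by positivity)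
  have hclt : 1 / Φ < c + 1 := by rw [hcf]; exact Nat.lt_floor_add_one _
  have hc1 : 1 ≤ c := by
    have h1 : 1 < 1 / Φ := one_lt_one_div hΦ0 hΦ1
    have h2 : (0 : ℝ) < c := by linarith
    exact_mod_cast h2
  have hc1' : (1 : ℝ) ≤ c := by exact_mod_cast hc1
  obtain ⟨y, hy⟩ : ∃ y, y = 1 / Φ - c := ⟨_, rfl⟩
  have hy0 : 0 ≤ y := by linarith
  have hy1 : y < 1 := by linarith
  obtain ⟨R, hR⟩ : ∃ R, R = c * r + r' := ⟨_, rfl⟩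
  have hR0 : 0 < R := by rw [hR]; positivity
  have hmC' := hmC.append hr hr' hc1
  rw [← hR, hc, ← cList_succ] at hmC'
  -- The real denominator `R + y r` belonging to the tail `Φ = 1 / (c + y)`.
  have hRy : (R + y * r) * r * v = P * Q := by
    have e1 : 1 / Φ = (1 - κ * r * r') / (κ * r ^ 2) := by rw [hΦ, one_div_div]
    have e2 : R + y * r = 1 / (κ * r) := by
      rw [hR, hy, e1]; field_simp; ring
    rw [e2, ← hκPQ]; field_simp
  have hRr : P * Q < (R + r) * r * v := by
    rw [← hRy]
    have : 0 < (1 - y) * (r * r * v) := mul_pos (by linarith) (by positivity)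
    nlinarith only [this]
  have hkey : Q * ((b - 1) * Q + q) ≤ R * (R + r) := by
    rcases halt with ⟨rfl, rfl, rfl, rfl⟩ | hI
    · have hQb : Q = b := by rw [hQ]; ring
      have hRc : R = c := by rw [hR]; ring
      rw [hP, hQb, hRc] at hRr
      rw [hQb, hRc]
      exact key_ineq_zero hb2 hv0 hv1 (by linarith)
    · rw [hP] at hM hRr
      exact key_ineq hq hq' hqq hr hr' hb2' hv0 hv1 hQ hI hM hRr
  -- `α - [0; c₁, …, cₙ₊₁] = [0; b₁, …, bₙ₊₁ + Θ₁]`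
  have hD : 0 < R * (R + y * r) := by positivity
  obtain ⟨μ, hμ⟩ : ∃ μ, μ = y / (R * (R + y * r)) := ⟨_, rfl⟩
  have hμ0 : 0 ≤ μ := by rw [hμ]; positivity
  have hμD : μ * (R * (R + y * r)) = y := by rw [hμ]; field_simp
  have hbound : μ * (Q * ((b - 1) * Q + q)) < 1 := by
    rw [hμ, div_mul_eq_mul_div, div_lt_one hD]
    have h1 := mul_le_mul_of_nonneg_left hkey hy0
    have h2 : 0 < (1 - y) * R ^ 2 := mul_pos (by linarith) (by positivity)
    nlinarith only [h1, h2]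
  have hμQ : 0 ≤ μ * Q ^ 2 := by positivity
  have hμd : μ * Q ^ 2 * (b - 1) + μ * Q * q < 1 := by nlinarith only [hbound]
  have hμd1 : μ * Q ^ 2 + μ * Q * q < 1 := by
    nlinarith only [hμd, mul_le_mul_of_nonneg_left (show (1 : ℝ) ≤ b - 1 by linarith) hμQ]
  have hμd' : μ * Q * q < 1 := by linarith
  have hden₁ : 0 < 1 - μ * Q * q := by linarith
  obtain ⟨Θ₁, hΘ₁⟩ : ∃ T, T = μ * Q ^ 2 / (1 - μ * Q * q) := ⟨_, rfl⟩
  have hΘ₁m : Θ₁ * (1 - μ * Q * q) = μ * Q ^ 2 := by rw [hΘ₁]; field_simp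
  have hΘ₁0 : 0 ≤ Θ₁ := by rw [hΘ₁]; positivity
  have heq₁ : α - cf (cList α (n + 1)) = cfT (bList α (n + 1)) Θ₁ := by
    have h1 := hmB'.shift hQ0 hq.le hμ0 hμd'
    rw [← hΘ₁, cfT_zero] at h1
    have h2 := hmC' y 0 hy0 le_rfl
    have h3 : cfT (cList α (n + 1)) y = cfT (cList α n) Φ := by
      rw [cList_succ, cfT_append, ← hc, hy, add_sub_cancel, one_div_one_div]
    have h4 : -ε * (y - 0) / ((R + y * r) * (R + 0 * r)) = -ε * μ := by
      rw [hμ]; field_simp; ring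
    rw [h3, ← hΦe, cfT_zero, h4] at h2
    linarith
  refine ⟨-ε, Q, R, Θ₁, hmB', hmC', ?_, ?_, hQ0, hq.le, hqQ, hR0, hr.le, hΘ₁0, ?_, heq₁, ?_,
    Or.inr ?_, ?_⟩
  · intro a ha
    rw [bList_succ, ← hb] at ha
    rcases List.mem_append.1 ha with ha | ha
    · exact hpB a ha
    · rw [List.mem_singleton.1 ha]; omega
  · intro a ha
    rw [cList_succ, ← hc] at ha
    rcases List.mem_append.1 ha with ha | ha
    · exact hpC a ha
    · rw [List.mem_singleton.1 ha]; exact hc1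
  · rw [hΘ₁, div_lt_one hden₁]; linarith
  · have h1 : μ * (Q * (Q + Θ₁ * q)) = Θ₁ := by linear_combination -hΘ₁m
    rcases hy0.eq_or_lt with h0 | hypos
    · have hμz : μ = 0 := by rw [hμ, ← h0, zero_div]
      rw [hμz, zero_mul] at h1
      rw [← h1, zero_mul, zero_mul, add_zero]; positivity
    · have hμp : 0 < μ := by rw [hμ]; positivity
      have hμR : μ * (R * (R + r)) < 1 := by
        rw [hμ, div_mul_eq_mul_div, div_lt_one hD]
        have h2 : 0 < (1 - y) * R ^ 2 := mul_pos (by linarith) (by positivity)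
        nlinarith only [h2]
      have hΘ₁p : 0 < Θ₁ := by rw [hΘ₁]; positivity
      refine lt_of_mul_lt_mul_left ?_ hμp.le
      rw [h1]
      nlinarith only [mul_lt_mul_of_pos_left hμR hΘ₁p]
  · have h1 : (Q - q) * Q * v ≤ P * Q := by
      have : (Q - q) * v ≤ P := by
        rw [hP]
        nlinarith only [mul_nonneg hQ0.le (sub_nonneg.2 hv1)]
      nlinarith only [mul_le_mul_of_nonneg_right this hQ0.le]
    refine lt_of_mul_lt_mul_right ?_ hv0.le
    nlinarith only [h1, hRr]
  · rw [← hb, hΘ₁, div_mul_eq_mul_div, div_lt_one hden₁]; linarith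

lemma exists_inv {α : ℝ} (hα : α ∈ Set.Icc (0 : ℝ) 1) (n : ℕ) (hd : shulgaDefined α (n + 1)) :
    ∃ ε q q' r r' Θ : ℝ, Inv_s6 α n ε q q' r r' Θ := by
  induction n with
  | zero => exact ⟨_, _, _, _, _, _, inv_zero hα (hd 0 (by simp)).1⟩
  | succ n ih =>
    obtain ⟨ε, q, q', r, r', Θ, h⟩ := ih fun k hk => hd k (by omega)
    obtain ⟨ε₁, Q, R, Θ₁, h₁⟩ := h.step (hd n (by omega)).1
    exact ⟨_, _, _, _, _, _, h₁⟩

/-- for `n ≥ 1`, the Shulga sequences satisfy `b_{n+1} ≥ bₙ`. -/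
theorem stmt6 (α : ℝ) (hα : α ∈ Set.Icc (0 : ℝ) 1) (n : ℕ) (hn : 1 ≤ n)
    (hdef : shulgaDefined α (n + 1)) : shulgaB α n ≤ shulgaB α (n + 1) := by
  obtain ⟨ε, q, q', r, r', Θ, h⟩ := exists_inv hα n hdef
  have hΘ : 0 < Θ := by
    refine lt_of_le_of_ne h.nonneg fun h0 => (hdef n (by omega)).1 ?_
    simp [h.gauss, ← h0]
  rw [shulgaB_succ, h.gauss]
  have h1 : (shulgaB α n : ℝ) - 1 < 1 / Θ := by
    rw [lt_div_iff₀ hΘ, mul_comm]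
    exact h.last
  have h2 := Nat.lt_floor_add_one (1 / Θ)
  have h3 : (shulgaB α n : ℝ) < ((⌊1 / Θ⌋₊ + 2 : ℕ) : ℝ) := by
    push_cast
    linarith
  have h4 : shulgaB α n < ⌊1 / Θ⌋₊ + 2 := by exact_mod_cast h3
  omega

end ShulgaPaper
end
end
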